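/- arXiv:2003.11002 — 6 statements merged into one kernel-verified Lean document; each statement's English description precedes it below -/
import Mathlib

section
/- Let m ≥ 2 and let L be a continuous symmetric m-linear form on a real or complex L_p(μ) space, with associated m-homogeneous polynomial L̂(x) = L(x,…,x). Then ‖L‖ ≤ (m^{m/p}/m!)·‖L̂‖ if 1 ≤ p ≤ m′, ‖L‖ ≤ (m^{m/m′}/m!)·‖L̂‖ = (m^{m−1}/m!)·‖L̂‖ if m′ ≤ p ≤ m, and ‖L‖ ≤ (m^{m/p′}/m!)·‖L̂‖ if m ≤ p ≤ ∞, where m′ = m/(m−1) and p′ = p/(p−1). -/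
open Metric MeasureTheory
open scoped ENNReal

/-- The conjugate exponent `p' = p/(p-1)` of an extended-real exponent `p`
(with `p' = 1` for `p = ∞`), as a real number. -/
noncomputable def conjExp (p : ℝ≥0∞) : ℝ :=
  if p = ∞ then 1 else p.toReal / (p.toReal - 1)

/-- sign -/
def sg (R : Type*) [Ring R] {n : ℕ} (e : Fin n → ℤˣ) (i : Fin n) : R := (((e i : ℤˣ) : ℤ) : R)

lemma sg_sq (R : Type*) [CommRing R] {n : ℕ} (e : Fin n → ℤˣ) (i : Fin n) : sg R e i * sg R e i = 1 := by
  unfold sg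
  rcases Int.units_eq_one_or (e i) with h | h <;> simp [h]

lemma sg_flip (R : Type*) [CommRing R] {n : ℕ} (e : Fin n → ℤˣ) (k i : Fin n) :
    sg R (e * Pi.mulSingle k (-1)) i = if i = k then - sg R e i else sg R e i := by
  unfold sg
  split_ifs with h
  · subst h; simp
  · simp [h]

lemma sum_flip {R : Type*} [Field R] [CharZero R] {n : ℕ} (k : Fin n) (f : (Fin n → ℤˣ) → R)
    (h : ∀ e, f (e * Pi.mulSingle k (-1)) = - f e) : ∑ e, f e = 0 := by
  have h1 : ∑ e, f (e * Pi.mulSingle k (-1)) = ∑ e, f e :=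
    Fintype.sum_bijective (fun e => e * Pi.mulSingle k (-1)) (Function.Involutive.bijective fun e => by
      ext i
      by_cases h : i = k
      · subst h; simp
      · simp [h]) _ _ (fun _ => rfl)
  simp only [h, Finset.sum_neg_distrib] at h1
  exact self_eq_neg.mp h1.symm

lemma sg_orth {n : ℕ} (i j : Fin n) :
    ∑ e : Fin n → ℤˣ, sg ℂ e i * sg ℂ e j = if i = j then (2:ℂ) ^ n else 0 := by
  split_ifs with h
  · subst h; simp [sg_sq]
  · apply sum_flip i
    intro e
    rw [sg_flip, sg_flip, if_pos rfl, if_neg (Ne.symm h)]; ring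

lemma conj_sg {n : ℕ} (e : Fin n → ℤˣ) (i : Fin n) : (starRingEnd ℂ) (sg ℂ e i) = sg ℂ e i := by
  simp [sg]

lemma norm_sg {𝕜 : Type*} [RCLike 𝕜] {n : ℕ} (e : Fin n → ℤˣ) (i : Fin n) : ‖sg 𝕜 e i‖ = 1 := by
  unfold sg
  rcases Int.units_eq_one_or (e i) with h | h <;> simp [h]

lemma parallelogram {n : ℕ} (u : Fin n → ℂ) :
    ∑ e : Fin n → ℤˣ, ‖∑ i, sg ℂ e i * u i‖ ^ 2 = (2:ℝ) ^ n * ∑ i, ‖u i‖ ^ 2 := by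
  have : (∑ e : Fin n → ℤˣ, ((‖∑ i, sg ℂ e i * u i‖ ^ 2 : ℝ) : ℂ)) = (2:ℂ) ^ n * ∑ i, ((‖u i‖ ^ 2 : ℝ) : ℂ) := by
    have h1 : ∀ z : ℂ, ((‖z‖ ^ 2 : ℝ) : ℂ) = z * (starRingEnd ℂ) z := by
      intro z; rw [Complex.mul_conj']; push_cast; rfl
    simp only [h1, map_sum, map_mul, conj_sg, Finset.sum_mul_sum]
    rw [Finset.sum_comm, Finset.mul_sum]
    refine Finset.sum_congr rfl fun i _ => ?_
    rw [Finset.sum_comm]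
    have : ∀ j, ∑ e : Fin n → ℤˣ, sg ℂ e i * u i * (sg ℂ e j * (starRingEnd ℂ) (u j))
      = (if i = j then (2:ℂ) ^ n else 0) * (u i * (starRingEnd ℂ) (u j)) := by
      intro j
      rw [← sg_orth, Finset.sum_mul]
      refine Finset.sum_congr rfl fun e _ => by ring
    simp [this]
  exact_mod_cast this

/-- analytic family -/
noncomputable def uu (w : ℂ) (t : ℝ) (z : ℂ) : ℂ :=
  if w = 0 then 0 else (w / (‖w‖ : ℂ)) * Complex.exp ((t * Real.log ‖w‖ / 2 : ℝ) * (1 + z))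

lemma uu_diff (w : ℂ) (t : ℝ) : Differentiable ℂ (uu w t) := by
  unfold uu
  split_ifs with h
  · exact differentiable_const _
  · fun_prop

lemma uu_norm (w : ℂ) (t : ℝ) (ht : 0 < t) (z : ℂ) (hz : 0 ≤ z.re) :
    ‖uu w t z‖ = ‖w‖ ^ (t * ((1 + z.re) / 2)) := by
  unfold uu
  split_ifs with h
  · subst h
    rw [norm_zero, Real.zero_rpow]; positivity
  · have h' : 0 < ‖w‖ := norm_pos_iff.mpr h
    rw [norm_mul, Complex.norm_exp, Real.rpow_def_of_pos h']
    have : ‖w / (‖w‖ : ℂ)‖ = 1 := by simp [h]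
    rw [this, one_mul, Complex.re_ofReal_mul]
    simp only [Complex.add_re, Complex.one_re]
    congr 1; ring

lemma uu_real (w : ℂ) (hw : w ≠ 0) (t x : ℝ) :
    uu w t x = (w / (‖w‖ : ℂ)) * ((‖w‖ ^ (t * ((1 + x) / 2)) : ℝ) : ℂ) := by
  have h' : 0 < ‖w‖ := norm_pos_iff.mpr hw
  rw [uu, if_neg hw, Real.rpow_def_of_pos h']
  push_cast
  congr 2; ring

lemma uu_bdd (w : ℂ) (t : ℝ) (ht : 0 < t) (z : ℂ) (hz : 0 ≤ z.re) (hz1 : z.re ≤ 1) :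
    ‖uu w t z‖ ≤ (1 + ‖w‖) ^ t := by
  rw [uu_norm w t ht z hz]
  calc ‖w‖ ^ (t * ((1 + z.re) / 2)) ≤ (1 + ‖w‖) ^ (t * ((1 + z.re) / 2)) := by
        apply Real.rpow_le_rpow (norm_nonneg _) (by linarith) (by positivity)
    _ ≤ _ := by
        apply Real.rpow_le_rpow_of_exponent_le (by linarith [norm_nonneg w])
        nlinarith

lemma HY {n : ℕ} (q : ℝ) (hq : 2 ≤ q) (a : Fin n → ℂ) :
    ∑ e : Fin n → ℤˣ, ‖∑ i, sg ℂ e i * a i‖ ^ q ≤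
      (2:ℝ) ^ n * (∑ i, ‖a i‖ ^ (q / (q - 1))) ^ (q - 1) := by
  set q' := q / (q - 1) with hq'
  have hq1 : 0 < q - 1 := by linarith
  have hq0 : 0 < q := by linarith
  have hq'0 : 0 < q' := by positivity
  set S : (Fin n → ℤˣ) → ℂ := fun e => ∑ i, sg ℂ e i * a i with hS
  change ∑ e, ‖S e‖ ^ q ≤ _
  set Y := ∑ e, ‖S e‖ ^ q with hY
  set X := ∑ i, ‖a i‖ ^ q' with hX
  have hY0 : 0 ≤ Y := by positivity
  have hX0 : 0 ≤ X := by positivity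
  rcases hY0.eq_or_lt with hY0' | hYpos
  · rw [← hY0']; positivity
  set th : ℝ := 1 - 2 / q with hth
  have hth0 : 0 ≤ th := by
    rw [hth, sub_nonneg, div_le_one hq0]; exact hq
  have hth1 : th ≤ 1 := by
    rw [hth]; have : 0 < 2 / q := by positivity
    linarith
  let F : ℂ → ℂ := fun z => ∑ e, uu ((starRingEnd ℂ) (S e)) q z * ∑ i, sg ℂ e i * uu (a i) q' z
  have hFd : Differentiable ℂ F := by
    apply Differentiable.fun_sum
    intro e _
    apply Differentiable.mul (uu_diff _ _)
    apply Differentiable.fun_sum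
    intro i _
    exact (uu_diff _ _).const_mul _
  have hF1 : ∀ z : ℂ, ‖F z‖ ≤ ∑ e, ‖uu ((starRingEnd ℂ) (S e)) q z‖ * ∑ i, ‖uu (a i) q' z‖ := by
    intro z
    refine (norm_sum_le _ _).trans (Finset.sum_le_sum fun e _ => ?_)
    rw [norm_mul]
    refine mul_le_mul_of_nonneg_left ((norm_sum_le _ _).trans (Finset.sum_le_sum fun i _ => ?_)) (norm_nonneg _)
    rw [norm_mul, norm_sg, one_mul]
  have key := Complex.HadamardThreeLines.norm_le_interp_of_mem_verticalClosedStrip₀₁' F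
    (z := (th : ℂ)) (a := √(2 ^ n * Y * X)) (b := Y * X) (by
      simp [Complex.HadamardThreeLines.verticalClosedStrip, hth0, hth1]) hFd.diffContOnCl
    (by
      refine ⟨∑ e, (1 + ‖(starRingEnd ℂ) (S e)‖) ^ q * ∑ i, (1 + ‖a i‖) ^ q', ?_⟩
      rintro _ ⟨z, hz, rfl⟩
      simp only [Complex.HadamardThreeLines.verticalClosedStrip, Set.mem_preimage, Set.mem_Icc] at hz
      refine (hF1 z).trans ?_
      gcongr with e _ i _
      · exact uu_bdd _ _ hq0 _ hz.1 hz.2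
      · exact uu_bdd _ _ hq'0 _ hz.1 hz.2)
    (by
      intro z hz
      simp only [Set.mem_preimage, Set.mem_singleton_iff] at hz
      refine Real.le_sqrt_of_sq_le ?_
      have h1 : ‖F z‖ ≤ ∑ e, ‖uu ((starRingEnd ℂ) (S e)) q z‖ * ‖∑ i, sg ℂ e i * uu (a i) q' z‖ := by
        refine (norm_sum_le _ _).trans (Finset.sum_le_sum fun e _ => ?_)
        rw [norm_mul]
      have h2 := Finset.sum_mul_sq_le_sq_mul_sq Finset.univ (fun e => ‖uu ((starRingEnd ℂ) (S e)) q z‖)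
        (fun e => ‖∑ i, sg ℂ e i * uu (a i) q' z‖)
      rw [parallelogram] at h2
      have h3 : ∀ (w : ℂ) (t : ℝ), 0 < t → ‖uu w t z‖ ^ 2 = ‖w‖ ^ t := by
        intro w t ht
        rw [uu_norm w t ht z hz.ge, hz, ← Real.rpow_natCast, ← Real.rpow_mul (norm_nonneg _)]
        congr 1; push_cast; ring
      simp only [h3 _ q hq0, h3 _ q' hq'0, RCLike.norm_conj] at h2
      calc ‖F z‖ ^ 2 ≤ _ := pow_le_pow_left₀ (norm_nonneg _) h1 2
        _ ≤ _ := h2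
        _ = _ := by rw [← hY, ← hX]; ring)
    (by
      intro z hz
      simp only [Set.mem_preimage, Set.mem_singleton_iff] at hz
      refine (hF1 z).trans ?_
      have h3 : ∀ (w : ℂ) (t : ℝ), 0 < t → ‖uu w t z‖ = ‖w‖ ^ t := by
        intro w t ht
        rw [uu_norm w t ht z (by rw [hz]; norm_num), hz]
        congr 1; ring
      simp only [h3 _ q hq0, h3 _ q' hq'0, RCLike.norm_conj]
      rw [← Finset.sum_mul])
  have hFth : F th = (Y : ℂ) := by
    have ha : ∀ i, uu (a i) q' th = a i := by
      intro i
      by_cases h : a i = 0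
      · simp [uu, h]
      · rw [uu_real _ h]
        have : q' * ((1 + th) / 2) = 1 := by
          rw [hq', hth]; field_simp; ring
        rw [this, Real.rpow_one, div_mul_cancel₀]
        simpa using h
    simp only [F, ha]
    rw [hY]; push_cast
    refine Finset.sum_congr rfl fun e _ => ?_
    change uu ((starRingEnd ℂ) (S e)) q th * S e = _
    by_cases h : S e = 0
    · rw [h]; simp [hq0.ne']
    · rw [uu_real _ (by simpa using h), RCLike.norm_conj]
      have h' : 0 < ‖S e‖ := norm_pos_iff.mpr h
      have : q * ((1 + th) / 2) = q - 1 := by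
        rw [hth]; field_simp; ring
      rw [this, Real.rpow_sub_one h'.ne']
      have h5 : (starRingEnd ℂ) (S e) * S e = (‖S e‖ : ℂ) ^ 2 := Complex.conj_mul' _
      have h6 : (‖S e‖ : ℂ) ≠ 0 := by exact_mod_cast h'.ne'
      push_cast
      field_simp
      linear_combination (((‖S e‖ ^ q : ℝ) : ℂ)) * h5
  rw [hFth] at key
  simp only [Complex.norm_real, Real.norm_of_nonneg hY0, Complex.ofReal_re] at key
  -- Y ≤ sqrt(N Y X)^(2/q) * (Y X)^(1-2/q)
  have hXpos : 0 < X := by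
    rcases hX0.eq_or_lt with h | h
    · rw [← h] at key
      exfalso
      have : Y ≤ 0 := by
        refine key.trans ?_
        rw [mul_zero, mul_zero, Real.sqrt_zero]
        rw [Real.zero_rpow (by rw [hth]; simp [hq0.ne']), zero_mul]
      linarith
    · exact h
  rw [← Real.log_le_log_iff hYpos (by positivity)]
  have k2 := Real.log_le_log hYpos key
  have hN : (0:ℝ) < 2 ^ n := by positivity
  rw [Real.log_mul (by positivity) (by positivity), Real.log_rpow (by positivity),
    Real.log_rpow (by positivity), Real.log_sqrt (by positivity), Real.log_mul (by positivity) (by positivity),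
    Real.log_mul (by positivity) (by positivity), Real.log_mul (by positivity) (by positivity)] at k2
  rw [Real.log_mul (by positivity) (by positivity), Real.log_rpow (by positivity)]
  have e1 : q * (1 - th) = 2 := by rw [hth]; field_simp; ring
  have e2 : q * th = q - 2 := by rw [hth]; field_simp
  have k3 := mul_le_mul_of_nonneg_left k2 hq0.le
  have k4 : q * ((1 - th) * ((Real.log (2 ^ n) + Real.log Y + Real.log X) / 2) + th * (Real.log Y + Real.log X))
    = Real.log (2 ^ n) + (q - 1) * Real.log Y + (q - 1) * Real.log X := by
    linear_combination ((Real.log (2 ^ n) + Real.log Y + Real.log X) / 2) * e1 + (Real.log Y + Real.log X) * e2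
  linarith

lemma scalarHY {𝕜 : Type*} [RCLike 𝕜] {n : ℕ} (q : ℝ) (hq : 2 ≤ q) (a : Fin n → 𝕜) :
    ∑ e : Fin n → ℤˣ, ‖∑ i, sg 𝕜 e i * a i‖ ^ q ≤
      (2:ℝ) ^ n * (∑ i, ‖a i‖ ^ (q / (q - 1))) ^ (q - 1) := by
  let φ : 𝕜 → ℂ := fun z => ⟨RCLike.re z, RCLike.im z⟩
  have hφ : ∀ z, ‖φ z‖ = ‖z‖ := by
    intro z
    have h1 : ‖φ z‖ ^ 2 = ‖z‖ ^ 2 := by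
      rw [Complex.sq_norm, Complex.normSq_mk, RCLike.norm_sq_eq_def]
    exact (sq_eq_sq₀ (norm_nonneg _) (norm_nonneg _)).1 h1
  have hS : ∀ e : Fin n → ℤˣ, φ (∑ i, sg 𝕜 e i * a i) = ∑ i, sg ℂ e i * φ (a i) := by
    intro e
    have h0 : ∀ i, sg 𝕜 e i * a i = ((((e i : ℤˣ) : ℤ) : ℝ) : 𝕜) * a i := by
      intro i; simp [sg]
    have h1 : ∀ i, sg ℂ e i * φ (a i) = ((((e i : ℤˣ) : ℤ) : ℝ) : ℂ) * φ (a i) := by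
      intro i; simp [sg]
    simp only [h0, h1]
    apply Complex.ext
    · simp only [φ, map_sum, Complex.re_sum, RCLike.re_ofReal_mul, Complex.re_ofReal_mul]
    · simp only [φ, map_sum, Complex.im_sum, RCLike.im_ofReal_mul, Complex.im_ofReal_mul]
  have := HY q hq (fun i => φ (a i))
  simp only [← hS, hφ] at this
  exact this

lemma polar {𝕜 : Type*} [RCLike 𝕜] {E : Type*} [AddCommGroup E] [Module 𝕜 E] {m : ℕ}
    (L : MultilinearMap 𝕜 (fun _ : Fin m => E) 𝕜)
    (hsym : ∀ (σ : Equiv.Perm (Fin m)) (v : Fin m → E), L (v ∘ σ) = L v) (x : Fin m → E) :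
    ∑ e : Fin m → ℤˣ, (∏ i, sg 𝕜 e i) * L (fun _ => ∑ i, sg 𝕜 e i • x i)
      = 2 ^ m * (m.factorial : 𝕜) * L x := by
  classical
  have h1 : ∀ e : Fin m → ℤˣ, L (fun _ => ∑ i, sg 𝕜 e i • x i)
      = ∑ r : Fin m → Fin m, (∏ j, sg 𝕜 e (r j)) * L (x ∘ r) := by
    intro e
    rw [L.map_sum (fun _ i => sg 𝕜 e i • x i)]
    refine Finset.sum_congr rfl fun r _ => ?_
    rw [L.map_smul_univ (fun j => sg 𝕜 e (r j)) (fun j => x (r j)), smul_eq_mul]; rfl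
  simp only [h1, Finset.mul_sum]
  rw [Finset.sum_comm]
  have h2 : ∀ r : Fin m → Fin m,
      ∑ e : Fin m → ℤˣ, (∏ i, sg 𝕜 e i) * ((∏ j, sg 𝕜 e (r j)) * L (x ∘ r))
      = if Function.Bijective r then 2 ^ m * L x else 0 := by
    intro r
    split_ifs with hr
    · have h3 : L (x ∘ r) = L x := hsym (Equiv.ofBijective r hr) x
      have h4 : ∀ e : Fin m → ℤˣ, (∏ i, sg 𝕜 e i) * ((∏ j, sg 𝕜 e (r j)) * L (x ∘ r)) = L x := by
        intro e
        rw [h3, hr.prod_comp (fun j => sg 𝕜 e j), ← mul_assoc, ← Finset.prod_mul_distrib]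
        simp [sg_sq]
      simp [h4]
    · have : ¬ Function.Surjective r := fun h => hr ⟨Finite.injective_iff_surjective.2 h, h⟩
      simp only [Function.Surjective, not_forall, not_exists] at this
      obtain ⟨k, hk⟩ := this
      apply sum_flip k
      intro e
      have h5 : ∏ j, sg 𝕜 (e * Pi.mulSingle k (-1)) (r j) = ∏ j, sg 𝕜 e (r j) := by
        refine Finset.prod_congr rfl fun j _ => ?_
        rw [sg_flip, if_neg (hk j)]
      have h6 : ∏ j, sg 𝕜 (e * Pi.mulSingle k (-1)) j = - ∏ j, sg 𝕜 e j := by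
        rw [← Finset.mul_prod_erase _ _ (Finset.mem_univ k), ← Finset.mul_prod_erase _ _ (Finset.mem_univ k),
          sg_flip, if_pos rfl, neg_mul]
        congr 2
        refine Finset.prod_congr rfl fun j hj => ?_
        rw [sg_flip, if_neg (Finset.ne_of_mem_erase hj)]
      rw [h5, h6]; ring
  simp only [h2]
  rw [← Finset.sum_filter, Finset.sum_const, nsmul_eq_mul]
  have h7 : (Finset.univ.filter (fun r : Fin m → Fin m => Function.Bijective r)).card = m.factorial := by
    rw [← Fintype.card_fin m, ← Fintype.card_perm, Fintype.card_fin m, ← Finset.card_univ]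
    symm
    refine Finset.card_bij (fun σ _ => (σ : Fin m → Fin m)) ?_ ?_ ?_
    · intro σ _; exact Finset.mem_filter.2 ⟨Finset.mem_univ _, σ.bijective⟩
    · intro σ _ τ _ h; exact Equiv.coe_fn_injective h
    · intro r hr
      exact ⟨Equiv.ofBijective r (Finset.mem_filter.1 hr).2, Finset.mem_univ _, rfl⟩
  rw [h7]; ring

lemma minkowski {α ι : Type*} [Fintype ι] [MeasurableSpace α] {μ : Measure α} (f : ι → α → ℝ)
    (hf : ∀ i, Integrable (f i) μ) (h0 : ∀ i t, 0 ≤ f i t) (s : ℝ) (hs : 1 ≤ s) :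
    Integrable (fun t => (∑ i, f i t ^ s) ^ (1 / s)) μ ∧
    (∑ i, (∫ t, f i t ∂μ) ^ s) ^ (1 / s) ≤ ∫ t, (∑ i, f i t ^ s) ^ (1 / s) ∂μ := by
  have hs0 : 0 < s := by linarith
  have : Fact (1 ≤ ENNReal.ofReal s) := ⟨by simpa using hs⟩
  have hts : (ENNReal.ofReal s).toReal = s := ENNReal.toReal_ofReal hs0.le
  let F : α → PiLp (ENNReal.ofReal s) (fun _ : ι => ℝ) := fun t => WithLp.toLp _ (fun i => f i t)
  have hF : Integrable F μ := Integrable.of_eval_piLp (fun i => hf i)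
  have hn : ∀ t, ‖F t‖ = (∑ i, f i t ^ s) ^ (1 / s) := by
    intro t
    rw [PiLp.norm_eq_sum (by rw [hts]; exact hs0), hts]
    congr 1
    refine Finset.sum_congr rfl fun i _ => ?_
    rw [Real.norm_of_nonneg (h0 i t)]
  have hi : ‖∫ t, F t ∂μ‖ = (∑ i, (∫ t, f i t ∂μ) ^ s) ^ (1 / s) := by
    rw [PiLp.norm_eq_sum (by rw [hts]; exact hs0), hts]
    congr 1
    refine Finset.sum_congr rfl fun i _ => ?_
    rw [eval_integral_piLp (fun i => hf i), Real.norm_of_nonneg (integral_nonneg (h0 i))]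
  refine ⟨?_, ?_⟩
  · simpa only [hn] using hF.norm
  · simpa only [hn, hi] using norm_integral_le_integral_norm F (μ := μ)

lemma Lp_norm_rpow {𝕜 α : Type*} [RCLike 𝕜] [MeasurableSpace α] {μ : Measure α} {p : ℝ≥0∞}
    [hp : Fact (1 ≤ p)] (hpt : p ≠ ∞) (f : Lp 𝕜 p μ) :
    ‖f‖ ^ p.toReal = ∫ t, ‖f t‖ ^ p.toReal ∂μ := by
  have hp0 : p ≠ 0 := (zero_lt_one.trans_le hp.out).ne'
  have hpp : 0 < p.toReal := ENNReal.toReal_pos hp0 hpt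
  rw [Lp.norm_def, (Lp.memLp f).eLpNorm_eq_integral_rpow_norm hp0 hpt, ENNReal.toReal_ofReal (by positivity),
    ← Real.rpow_mul (by positivity), inv_mul_cancel₀ hpp.ne', Real.rpow_one]

lemma avg_bound {𝕜 α : Type*} [RCLike 𝕜] [MeasurableSpace α] {μ : Measure α} {p : ℝ≥0∞}
    [hp : Fact (1 ≤ p)] (hpt : p ≠ ∞) {m : ℕ} (hm : 2 ≤ m) (r C : ℝ) (hrp : p.toReal ≤ r)
    (hrm : (m : ℝ) ≤ r) (hC : 0 ≤ C)
    (hsc : ∀ a : Fin m → 𝕜, (∑ i, ‖a i‖ ^ (r / (r - 1))) ^ (p.toReal * (r - 1) / r)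
      ≤ C * ∑ i, ‖a i‖ ^ p.toReal)
    (x : Fin m → Lp 𝕜 p μ) (hx : ∀ i, ‖x i‖ ≤ 1) :
    ∑ e : Fin m → ℤˣ, ‖∑ i, sg 𝕜 e i • x i‖ ^ m ≤ 2 ^ m * (C * m) ^ ((m : ℝ) / p.toReal) := by
  have hp0 : p ≠ 0 := (zero_lt_one.trans_le hp.out).ne'
  have hpp : 0 < p.toReal := ENNReal.toReal_pos hp0 hpt
  set P := p.toReal with hP
  have hm2 : (2:ℝ) ≤ m := by exact_mod_cast hm
  have hr2 : 2 ≤ r := by linarith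
  have hr0 : 0 < r := by linarith
  have hm0 : (0:ℝ) < m := by linarith
  set S : (Fin m → ℤˣ) → Lp 𝕜 p μ := fun e => ∑ i, sg 𝕜 e i • x i with hS
  have hint : ∀ f : Lp 𝕜 p μ, Integrable (fun t => ‖f t‖ ^ P) μ := fun f =>
    (Lp.memLp f).integrable_norm_rpow hp0 hpt
  obtain ⟨hi, hk⟩ := minkowski (μ := μ) (fun e t => ‖S e t‖ ^ P) (fun e => hint (S e))
    (fun e t => by positivity) (r / P) ((one_le_div hpp).2 hrp)
  have hPr : ∀ y : ℝ, 0 ≤ y → (y ^ P) ^ (r / P) = y ^ r := by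
    intro y hy
    rw [← Real.rpow_mul hy]; congr 1; field_simp
  have hSt : ∀ᵐ t ∂μ, ∀ e, S e t = ∑ i, sg 𝕜 e i * x i t := by
    rw [ae_all_iff]
    intro e
    have h1 : ∀ᵐ t ∂μ, ∀ i, (sg 𝕜 e i • x i : Lp 𝕜 p μ) t = sg 𝕜 e i * x i t := by
      rw [ae_all_iff]; intro i
      filter_upwards [Lp.coeFn_smul (sg 𝕜 e i) (x i)] with t ht
      rw [ht]; rfl
    filter_upwards [h1, Lp.coeFn_finsetSum Finset.univ (fun i => sg 𝕜 e i • x i)] with t h1 h2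
    rw [hS]
    simp only [h2, Finset.sum_apply, h1]
  have hLn : ∀ f : Lp 𝕜 p μ, ∫ t, ‖f t‖ ^ P ∂μ = ‖f‖ ^ P := fun f => (Lp_norm_rpow hpt f).symm
  simp only [hLn] at hk
  simp only [hPr _ (norm_nonneg _)] at hk hi
  have hB : ∫ t, (∑ e, ‖S e t‖ ^ r) ^ (1 / (r / P)) ∂μ
      ≤ ∫ t, ((2:ℝ) ^ m) ^ (P / r) * (C * ∑ i, ‖x i t‖ ^ P) ∂μ := by
    refine integral_mono_ae hi ?_ ?_
    · exact ((integrable_finsetSum _ fun i _ => hint (x i)).const_mul _).const_mul _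
    · filter_upwards [hSt] with t ht
      simp only [ht]
      rw [one_div_div]
      have h1 := scalarHY r hr2 (fun i => x i t)
      calc _ ≤ ((2:ℝ) ^ m * (∑ i, ‖x i t‖ ^ (r / (r - 1))) ^ (r - 1)) ^ (P / r) :=
            Real.rpow_le_rpow (by positivity) h1 (by positivity)
        _ = ((2:ℝ) ^ m) ^ (P / r) * (∑ i, ‖x i t‖ ^ (r / (r - 1))) ^ (P * (r - 1) / r) := by
            rw [Real.mul_rpow (by positivity) (by positivity), ← Real.rpow_mul (by positivity)]
            congr 2; ring
        _ ≤ _ := by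
            gcongr
            exact hsc _
  have hB2 : ∫ t, ((2:ℝ) ^ m) ^ (P / r) * (C * ∑ i, ‖x i t‖ ^ P) ∂μ ≤ ((2:ℝ) ^ m) ^ (P / r) * (C * m) := by
    rw [integral_const_mul, integral_const_mul, integral_finsetSum _ fun i _ => hint (x i)]
    gcongr
    calc ∑ i, ∫ t, ‖x i t‖ ^ P ∂μ ≤ ∑ i : Fin m, (1:ℝ) := by
          refine Finset.sum_le_sum fun i _ => ?_
          rw [← Lp_norm_rpow hpt]
          exact Real.rpow_le_one (norm_nonneg _) (hx i) hpp.le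
      _ = m := by simp
  have hC2 : ∑ e, ‖S e‖ ^ r ≤ 2 ^ m * (C * m) ^ (r / P) := by
    have h1 := (hk.trans hB).trans hB2
    have h2 := Real.rpow_le_rpow (by positivity) h1 (z := r / P) (by positivity)
    rw [← Real.rpow_mul (by positivity), Real.mul_rpow (by positivity) (by positivity), ← Real.rpow_mul (by positivity)] at h2
    rw [show 1 / (r / P) * (r / P) = 1 by field_simp, show P / r * (r / P) = 1 by field_simp, Real.rpow_one, Real.rpow_one] at h2
    exact h2
  have hD := Real.rpow_sum_le_const_mul_sum_rpow_of_nonneg Finset.univ (f := fun e => ‖S e‖ ^ m)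
    (p := r / m) ((one_le_div hm0).2 hrm) (fun e _ => by positivity)
  have h8 : ∀ e, (‖S e‖ ^ m) ^ (r / m) = ‖S e‖ ^ r := by
    intro e
    rw [← Real.rpow_natCast, ← Real.rpow_mul (norm_nonneg _)]; congr 1; field_simp
  have hcard : ((Finset.univ : Finset (Fin m → ℤˣ)).card : ℝ) = 2 ^ m := by
    simp
  simp only [h8, hcard] at hD
  have hE : (∑ e, ‖S e‖ ^ m) ^ (r / m) ≤ (2 ^ m * (C * m) ^ ((m : ℝ) / P)) ^ (r / m) := by
    refine hD.trans ((mul_le_mul_of_nonneg_left hC2 (by positivity)).trans_eq ?_)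
    have hB0 : 0 ≤ C * m := by positivity
    generalize C * (m : ℝ) = B at hB0
    rw [Real.mul_rpow (by positivity) (by positivity), ← Real.rpow_mul hB0, ← mul_assoc,
      ← Real.rpow_add_one (by positivity)]
    congr 2
    · ring
    · field_simp
  exact (Real.rpow_le_rpow_iff (by positivity) (by positivity) (by positivity)).1 hE

lemma from_avg {𝕜 : Type*} [RCLike 𝕜] {E : Type*} [NormedAddCommGroup E] [NormedSpace 𝕜 E]
    {m : ℕ} (hm : 2 ≤ m)
    (L : ContinuousMultilinearMap 𝕜 (fun _ : Fin m => E) 𝕜)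
    (hsym : ∀ (σ : Equiv.Perm (Fin m)) (v : Fin m → E), L (v ∘ σ) = L v) (D : ℝ) (hD : 0 ≤ D)
    (h : ∀ x : Fin m → E, (∀ i, ‖x i‖ ≤ 1) →
      ∑ e : Fin m → ℤˣ, ‖∑ i, sg 𝕜 e i • x i‖ ^ m ≤ 2 ^ m * D) :
    ‖L‖ ≤ D / (m.factorial : ℝ) * sSup ((fun u => ‖L (fun _ => u)‖) '' closedBall (0 : E) 1) := by
  set K := sSup ((fun u => ‖L (fun _ => u)‖) '' closedBall (0 : E) 1) with hK
  have hbdd : BddAbove ((fun u => ‖L (fun _ => u)‖) '' closedBall (0 : E) 1) := by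
    refine ⟨‖L‖, ?_⟩
    rintro _ ⟨u, hu, rfl⟩
    rw [mem_closedBall_zero_iff] at hu
    refine (L.le_opNorm _).trans ?_
    simp only [Finset.prod_const]
    exact mul_le_of_le_one_right (norm_nonneg _) (pow_le_one₀ (norm_nonneg _) hu)
  have hK1 : ∀ u : E, ‖u‖ ≤ 1 → ‖L (fun _ => u)‖ ≤ K := fun u hu =>
    le_csSup hbdd ⟨u, by simpa using hu, rfl⟩
  have hK0 : 0 ≤ K := (norm_nonneg _).trans (hK1 0 (by simp))
  have hK2 : ∀ u : E, ‖L (fun _ => u)‖ ≤ K * ‖u‖ ^ m := by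
    intro u
    by_cases hu : u = 0
    · have : L (fun _ => u) = 0 := L.map_coord_zero (⟨0, by omega⟩ : Fin m) hu
      rw [this, norm_zero]; positivity
    · have hu' : 0 < ‖u‖ := norm_pos_iff.2 hu
      have h1 := hK1 (((‖u‖⁻¹ : ℝ) : 𝕜) • u) (by
        rw [norm_smul, RCLike.norm_ofReal, abs_of_pos (inv_pos.2 hu'), inv_mul_cancel₀ hu'.ne'])
      rw [L.map_smul_univ (fun _ => ((‖u‖⁻¹ : ℝ) : 𝕜)) (fun _ => u)] at h1
      simp only [Finset.prod_const, Finset.card_univ, Fintype.card_fin, norm_smul, norm_pow,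
        RCLike.norm_ofReal, abs_of_pos (inv_pos.2 hu')] at h1
      rw [inv_pow, inv_mul_le_iff₀ (by positivity)] at h1
      linarith
  have hmf : (0:ℝ) < m.factorial := by exact_mod_cast m.factorial_pos
  have hunit : ∀ x : Fin m → E, (∀ i, ‖x i‖ ≤ 1) → ‖L x‖ ≤ D / (m.factorial : ℝ) * K := by
    intro x hx
    have h1 := congrArg norm (polar L.toMultilinearMap hsym x)
    simp only [norm_mul, norm_pow, RCLike.norm_ofNat, RCLike.norm_natCast,
      ContinuousMultilinearMap.coe_coe] at h1
    have h2 : (2:ℝ) ^ m * m.factorial * ‖L x‖ ≤ K * (2 ^ m * D) := by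
      rw [← h1]
      refine (norm_sum_le _ _).trans ?_
      refine le_trans ?_ (mul_le_mul_of_nonneg_left (h x hx) hK0)
      rw [Finset.mul_sum]
      refine Finset.sum_le_sum fun e _ => ?_
      rw [norm_mul, norm_prod]
      simp only [norm_sg, Finset.prod_const_one, one_mul]
      exact hK2 _
    rw [div_mul_eq_mul_div, le_div_iff₀ hmf]
    have h3 : (0:ℝ) < 2 ^ m := by positivity
    refine le_of_mul_le_mul_left ?_ h3
    linarith
  refine L.opNorm_le_bound (by positivity) fun x => ?_
  by_cases h0 : ∃ i, x i = 0
  · obtain ⟨i, hi⟩ := h0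
    rw [L.map_coord_zero i hi, norm_zero]; positivity
  · push Not at h0
    have h1 := hunit (fun i => ((‖x i‖⁻¹ : ℝ) : 𝕜) • x i) (fun i => by
      have := norm_pos_iff.2 (h0 i)
      rw [norm_smul, RCLike.norm_ofReal, abs_of_pos (inv_pos.2 this), inv_mul_cancel₀ this.ne'])
    rw [L.map_smul_univ (fun i => ((‖x i‖⁻¹ : ℝ) : 𝕜)) x, norm_smul, norm_prod] at h1
    simp only [RCLike.norm_ofReal, abs_inv, abs_norm, Finset.prod_inv_distrib] at h1
    rw [inv_mul_le_iff₀ (Finset.prod_pos fun i _ => norm_pos_iff.2 (h0 i))] at h1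
    linarith

lemma sum_rpow_sub {n : ℕ} (b : Fin n → ℝ) (hb : ∀ i, 0 ≤ b i) (s : ℝ) (hs0 : 0 < s) (hs : s ≤ 1) :
    (∑ i, b i) ^ s ≤ ∑ i, b i ^ s := by
  refine Finset.le_sum_of_subadditive_on_pred (fun y : ℝ => y ^ s) (fun y => 0 ≤ y)
    ?_ ?_ ?_ b (s := Finset.univ) (fun i _ => hb i)
  · exact (Real.zero_rpow hs0.ne').le
  · intro x y hx hy; exact Real.rpow_add_le_add_rpow hx hy hs0.le hs
  · intro x y hx hy; exact add_nonneg hx hy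

lemma sc_gen {𝕜 : Type*} [RCLike 𝕜] {m : ℕ} (hm : 2 ≤ m) (P r : ℝ) (hr : 2 ≤ r) (hP : 1 ≤ P)
    (hs : 1 ≤ P * (r - 1) / r) (a : Fin m → 𝕜) :
    (∑ i, ‖a i‖ ^ (r / (r - 1))) ^ (P * (r - 1) / r)
      ≤ (m : ℝ) ^ (P * (r - 1) / r - 1) * ∑ i, ‖a i‖ ^ P := by
  have h1 := Real.rpow_sum_le_const_mul_sum_rpow_of_nonneg Finset.univ
    (f := fun i => ‖a i‖ ^ (r / (r - 1))) hs (fun i _ => by positivity)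
  have hr1 : 0 < r - 1 := by linarith
  have h2 : ∀ i, (‖a i‖ ^ (r / (r - 1))) ^ (P * (r - 1) / r) = ‖a i‖ ^ P := by
    intro i
    rw [← Real.rpow_mul (norm_nonneg _)]; congr 1; field_simp
  simpa only [h2, Finset.card_univ, Fintype.card_fin] using h1

lemma main_gen {𝕜 : Type*} [RCLike 𝕜] {α : Type*} [MeasurableSpace α] (μ : Measure α)
    (m : ℕ) (hm : 2 ≤ m) (p : ℝ≥0∞) [hp : Fact (1 ≤ p)] (hpt : p ≠ ∞)
    (L : ContinuousMultilinearMap 𝕜 (fun _ : Fin m => Lp 𝕜 p μ) 𝕜)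
    (hsym : ∀ (σ : Equiv.Perm (Fin m)) (v : Fin m → Lp 𝕜 p μ), L (v ∘ σ) = L v)
    (r : ℝ) (hrm : m ≤ r) (hrp : p.toReal ≤ r) (hs : 1 ≤ p.toReal * (r - 1) / r) :
    ‖L‖ ≤ (m : ℝ) ^ ((m : ℝ) * (r - 1) / r) / (m.factorial : ℝ)
          * sSup ((fun u => ‖L (fun _ => u)‖) '' closedBall (0 : Lp 𝕜 p μ) 1) := by
  have hm2 : (2:ℝ) ≤ m := by exact_mod_cast hm
  have hP : 1 ≤ p.toReal := by
    rw [← ENNReal.toReal_one]; exact ENNReal.toReal_mono hpt hp.out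
  refine from_avg hm L hsym _ (by positivity) fun x hx => ?_
  refine (avg_bound hpt hm r ((m : ℝ) ^ (p.toReal * (r - 1) / r - 1)) hrp hrm (by positivity)
    (sc_gen hm _ r (by linarith) hP hs) x hx).trans_eq ?_
  rw [← Real.rpow_add_one (by positivity), ← Real.rpow_mul (by positivity)]
  congr 2
  have : r ≠ 0 := by linarith
  field_simp
  ring

/-- Polarization estimates on real or complex `L_p(μ)`: a continuous symmetric
`m`-linear form `L` with associated `m`-homogeneous polynomial `L̂` satisfies
`‖L‖ ≤ (m^{m/p}/m!) ‖L̂‖` for `1 ≤ p ≤ m'`,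
`‖L‖ ≤ (m^{m/m'}/m!) ‖L̂‖ = (m^{m-1}/m!) ‖L̂‖` for `m' ≤ p ≤ m`, and
`‖L‖ ≤ (m^{m/p'}/m!) ‖L̂‖` for `m ≤ p ≤ ∞`, where `m' = m/(m-1)`, `p' = p/(p-1)`. -/
theorem polarization_Lp
    {𝕜 : Type*} [RCLike 𝕜] {α : Type*} [MeasurableSpace α] (μ : Measure α)
    (m : ℕ) (hm : 2 ≤ m) (p : ℝ≥0∞) [Fact (1 ≤ p)]
    (L : ContinuousMultilinearMap 𝕜 (fun _ : Fin m => Lp 𝕜 p μ) 𝕜)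
    (hsym : ∀ (σ : Equiv.Perm (Fin m)) (v : Fin m → Lp 𝕜 p μ), L (v ∘ σ) = L v) :
    (p ≤ ENNReal.ofReal ((m : ℝ) / ((m : ℝ) - 1)) →
      ‖L‖ ≤ (m : ℝ) ^ ((m : ℝ) / p.toReal) / (m.factorial : ℝ)
          * sSup ((fun u => ‖L (fun _ => u)‖) '' closedBall (0 : Lp 𝕜 p μ) 1)) ∧
    (ENNReal.ofReal ((m : ℝ) / ((m : ℝ) - 1)) ≤ p → p ≤ (m : ℝ≥0∞) →
      ‖L‖ ≤ (m : ℝ) ^ ((m : ℝ) / ((m : ℝ) / ((m : ℝ) - 1))) / (m.factorial : ℝ)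
          * sSup ((fun u => ‖L (fun _ => u)‖) '' closedBall (0 : Lp 𝕜 p μ) 1) ∧
        (m : ℝ) ^ ((m : ℝ) / ((m : ℝ) / ((m : ℝ) - 1))) = (m : ℝ) ^ (m - 1 : ℕ)) ∧
    ((m : ℝ≥0∞) ≤ p →
      ‖L‖ ≤ (m : ℝ) ^ ((m : ℝ) / conjExp p) / (m.factorial : ℝ)
          * sSup ((fun u => ‖L (fun _ => u)‖) '' closedBall (0 : Lp 𝕜 p μ) 1)) := by
  have hp1 : 1 ≤ p := Fact.out
  have hm2 : (2:ℝ) ≤ m := by exact_mod_cast hm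
  have hm1 : (0:ℝ) < m - 1 := by linarith
  have hm0 : (0:ℝ) < m := by linarith
  have hPge : p ≠ ∞ → 1 ≤ p.toReal := fun hpt => by
    rw [← ENNReal.toReal_one]; exact ENNReal.toReal_mono hpt hp1
  refine ⟨fun h => ?_, fun h1 h2 => ⟨?_, ?_⟩, fun h => ?_⟩
  · have hpt : p ≠ ∞ := ne_top_of_le_ne_top ENNReal.ofReal_ne_top h
    have hP := hPge hpt
    have hP2 : p.toReal ≤ m / (m - 1) := ENNReal.toReal_le_of_le_ofReal (by positivity) h
    have hP3 : p.toReal * (m - 1) ≤ m := (le_div_iff₀ hm1).1 hP2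
    have hP4 : p.toReal ≤ m := by nlinarith
    refine from_avg hm L hsym _ (by positivity) fun x hx => ?_
    have := avg_bound hpt hm m 1 hP4 le_rfl zero_le_one (fun a => ?_) x hx
    · rwa [one_mul] at this
    · have h3 := sum_rpow_sub (fun i => ‖a i‖ ^ ((m : ℝ) / (m - 1))) (fun i => by positivity)
        (p.toReal * (m - 1) / m) (by positivity) ((div_le_one hm0).2 hP3)
      have h2 : ∀ i, (‖a i‖ ^ ((m:ℝ) / (m - 1))) ^ (p.toReal * (m - 1) / m) = ‖a i‖ ^ p.toReal := by
        intro i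
        rw [← Real.rpow_mul (norm_nonneg _)]; congr 1; field_simp
      simp only [h2] at h3
      rwa [one_mul]
  · have hpt : p ≠ ∞ := ne_top_of_le_ne_top (ENNReal.natCast_ne_top m) h2
    have hP1 : (m:ℝ) / (m - 1) ≤ p.toReal := (ENNReal.ofReal_le_iff_le_toReal hpt).1 h1
    have hP2 : p.toReal ≤ m := by
      have := ENNReal.toReal_mono (ENNReal.natCast_ne_top m) h2
      simpa using this
    have := main_gen μ m hm p hpt L hsym m le_rfl hP2 (by
      rw [le_div_iff₀ hm0, one_mul]; exact (div_le_iff₀ hm1).1 hP1)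
    rwa [div_div_eq_mul_div]
  · rw [← Real.rpow_natCast]
    congr 1
    rw [Nat.cast_sub (by omega)]
    field_simp
    simp
  · by_cases hpt : p = ∞
    · rw [conjExp, if_pos hpt, div_one]
      refine from_avg hm L hsym _ (by positivity) fun x hx => ?_
      have : ∀ e : Fin m → ℤˣ, ‖∑ i, sg 𝕜 e i • x i‖ ^ m ≤ (m:ℝ) ^ (m : ℝ) := by
        intro e
        rw [Real.rpow_natCast]
        refine pow_le_pow_left₀ (norm_nonneg _) ((norm_sum_le _ _).trans ?_) m
        calc ∑ i, ‖sg 𝕜 e i • x i‖ ≤ ∑ i : Fin m, (1:ℝ) := by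
              refine Finset.sum_le_sum fun i _ => ?_
              rw [norm_smul, norm_sg, one_mul]; exact hx i
          _ = m := by simp
      refine (Finset.sum_le_sum fun e _ => this e).trans_eq ?_
      simp
    · have hP : (m:ℝ) ≤ p.toReal := by
        have := ENNReal.toReal_mono hpt h
        simpa using this
      have hP0 : 0 < p.toReal := by linarith
      have := main_gen μ m hm p hpt L hsym p.toReal hP le_rfl (by
        rw [le_div_iff₀ hP0, one_mul]; nlinarith)
      rw [conjExp, if_neg hpt, div_div_eq_mul_div]
      exact this
end

section
/- Let m ≥ 2 and 1 ≤ p ≤ m′ = m/(m−1). On the sequence space ℓ_p (real or complex), the symmetric m-linear form L(x₁,…,x_m) = (1/m!) Σ_{σ ∈ S_m} x_{1σ(1)}⋯x_{mσ(m)}, whose associated m-homogeneous polynomial is L̂(u) = u₁⋯u_m, satisfies ‖L‖ = 1/m!, ‖L̂‖ = m^{−m/p}, and hence ‖L‖ = (m^{m/p}/m!)·‖L̂‖; consequently the m-th polarization constant of ℓ_p equals m^{m/p}/m! for 1 ≤ p ≤ m′. -/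
open Metric
open scoped ENNReal

lemma aux_amgm (a b : ℕ) (x y : ℝ) (hx : 0 ≤ x) (hy : 0 ≤ y) (hab : 0 < a + b) :
    ((a : ℝ) + b) * (x ^ a * y ^ b) ≤ a * x ^ (a + b) + b * y ^ (a + b) := by
  have hpos : (0 : ℝ) < (a : ℝ) + b := by exact_mod_cast hab
  have h := Real.geom_mean_le_arith_mean2_weighted (w₁ := a / ((a : ℝ) + b))
    (w₂ := b / ((a : ℝ) + b)) (p₁ := x ^ (a + b)) (p₂ := y ^ (a + b))
    (by positivity) (by positivity) (by positivity) (by positivity) (by field_simp)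
  have e1 : (x ^ (a + b)) ^ (a / ((a : ℝ) + b)) = x ^ a := by
    rw [← Real.rpow_natCast, ← Real.rpow_mul hx, ← Real.rpow_natCast]
    congr 1; push_cast; field_simp
  have e2 : (y ^ (a + b)) ^ (b / ((a : ℝ) + b)) = y ^ b := by
    rw [← Real.rpow_natCast, ← Real.rpow_mul hy, ← Real.rpow_natCast]
    congr 1; push_cast; field_simp
  rw [e1, e2] at h
  have h2 := mul_le_mul_of_nonneg_left h hpos.le
  refine h2.trans (le_of_eq ?_)
  field_simp

lemma aux_term (n j : ℕ) (hj : j ≤ n) (x y : ℝ) (hx : 0 ≤ x) (hy : 0 ≤ y) :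
    ((n + 1).choose (j + 1) : ℝ) * ((x ^ n) ^ (n - j) * (y ^ n) ^ (j + 1)) ≤
      (n.choose (j + 1) : ℝ) * ((x ^ (n + 1)) ^ (n - (j + 1)) * (y ^ (n + 1)) ^ (j + 1)) +
      (n.choose j : ℝ) * ((x ^ (n + 1)) ^ (n - j) * (y ^ (n + 1)) ^ j) := by
  rcases hj.eq_or_lt with rfl | hlt
  · simp [← pow_mul, mul_comm]
  · obtain ⟨d, rfl⟩ := Nat.exists_eq_add_of_lt hlt
    have e1 : j + d + 1 - j = d + 1 := by omega
    have e2 : j + d + 1 - (j + 1) = d := by omega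
    rw [e1, e2]
    have h := aux_amgm (j + 1) (d + 1) x y hx hy (by omega)
    have c1 : ((j + d + 1 + 1 : ℕ) : ℝ) * ((j + d + 1).choose j : ℝ) =
        ((j + d + 1 + 1).choose (j + 1) : ℝ) * (j + 1 : ℕ) := by
      exact_mod_cast Nat.add_one_mul_choose_eq (j + d + 1) j
    have c2 : (((j + d + 1 + 1).choose (j + 1) : ℕ) : ℝ) =
        ((j + d + 1).choose j : ℝ) + ((j + d + 1).choose (j + 1) : ℝ) := by
      exact_mod_cast Nat.choose_succ_succ (j + d + 1) j
    set C : ℝ := ((j + d + 1 + 1).choose (j + 1) : ℝ)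
    set D : ℝ := ((j + d + 1).choose j : ℝ)
    set E : ℝ := ((j + d + 1).choose (j + 1) : ℝ)
    have hC : 0 ≤ C := by positivity
    push_cast at c1 h
    have hE : ((j : ℝ) + d + 1 + 1) * E = C * (d + 1) := by
      have : E = C - D := by linarith
      rw [this]; linear_combination -c1
    have key : C * (x ^ (j + 1) * y ^ (d + 1)) ≤
        E * y ^ (j + d + 1 + 1) + D * x ^ (j + d + 1 + 1) := by
      have hpos : (0 : ℝ) < (j : ℝ) + d + 1 + 1 := by positivity
      refine le_of_mul_le_mul_left ?_ hpos
      have h3 := mul_le_mul_of_nonneg_left h hC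
      have e3 : j + 1 + (d + 1) = j + d + 1 + 1 := by omega
      rw [e3] at h3
      calc _ = C * (((j : ℝ) + 1 + (d + 1)) * (x ^ (j + 1) * y ^ (d + 1))) := by ring
        _ ≤ _ := h3
        _ = _ := by
          linear_combination (-(y ^ (j + d + 1 + 1))) * hE - x ^ (j + d + 1 + 1) * c1
    have hm := mul_le_mul_of_nonneg_left key
      (show 0 ≤ (x ^ (j + d + 1 + 1)) ^ d * (y ^ (j + d + 1 + 1)) ^ j by positivity)
    refine le_trans (le_of_eq ?_) (hm.trans (le_of_eq ?_))
    · have : (x ^ (j + d + 1)) ^ (d + 1) * (y ^ (j + d + 1)) ^ (j + 1) =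
          (x ^ (j + d + 1 + 1)) ^ d * (y ^ (j + d + 1 + 1)) ^ j *
          (x ^ (j + 1) * y ^ (d + 1)) := by ring
      rw [this]; ring
    · ring

lemma aux_real (n : ℕ) (x y : ℝ) (hx : 0 ≤ x) (hy : 0 ≤ y) :
    (x ^ n + y ^ n) ^ (n + 1) + (x ^ n - y ^ n) ^ (n + 1) ≤
      2 * (x ^ (n + 1) + y ^ (n + 1)) ^ n := by
  set w : ℕ → ℝ := fun k => 1 + (-1) ^ k with hw
  have hw0 : ∀ k, 0 ≤ w k := by
    intro k
    rcases neg_one_pow_eq_or ℝ k with h | h <;> simp [hw, h]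
  set c : ℕ → ℝ := fun j =>
    (n.choose j : ℝ) * ((x ^ (n + 1)) ^ (n - j) * (y ^ (n + 1)) ^ j) with hc
  have hR : (x ^ (n + 1) + y ^ (n + 1)) ^ n = ∑ j ∈ Finset.range (n + 1), c j := by
    rw [add_comm, add_pow]
    refine Finset.sum_congr rfl fun j _ => ?_
    simp only [hc]; ring
  have hL : (x ^ n + y ^ n) ^ (n + 1) + (x ^ n - y ^ n) ^ (n + 1) =
      ∑ k ∈ Finset.range (n + 2), w k *
        (((n + 1).choose k : ℝ) * ((x ^ n) ^ (n + 1 - k) * (y ^ n) ^ k)) := by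
    rw [sub_eq_add_neg, add_comm (x ^ n), add_comm (x ^ n), add_pow, add_pow,
      ← Finset.sum_add_distrib]
    refine Finset.sum_congr rfl fun j _ => ?_
    simp only [hw]; rw [neg_pow]; ring
  rw [hL, hR, Finset.sum_range_succ']
  have hcn : c (n + 1) = 0 := by simp [hc]
  calc _ ≤ ∑ j ∈ Finset.range (n + 1), w (j + 1) * (c (j + 1) + c j) + w 0 * c 0 := by
        refine add_le_add (Finset.sum_le_sum fun j hj => ?_) (le_of_eq ?_)
        · refine mul_le_mul_of_nonneg_left ?_ (hw0 _)
          have := aux_term n j (Nat.lt_succ_iff.1 (Finset.mem_range.1 hj)) x y hx hy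
          simpa [hc] using this
        · simp [hc, ← pow_mul, mul_comm]
    _ = (∑ j ∈ Finset.range (n + 1), w (j + 1) * c (j + 1) + w 0 * c 0) +
          ∑ j ∈ Finset.range (n + 1), w (j + 1) * c j := by
        simp only [mul_add, Finset.sum_add_distrib]; ring
    _ = ∑ j ∈ Finset.range (n + 1), w j * c j + ∑ j ∈ Finset.range (n + 1), w (j + 1) * c j := by
        rw [← Finset.sum_range_succ' (fun j => w j * c j), Finset.sum_range_succ _ (n + 1), hcn]
        ring
    _ = _ := by
        rw [← Finset.sum_add_distrib, Finset.mul_sum]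
        refine Finset.sum_congr rfl fun j _ => ?_
        simp only [hw]; ring

lemma aux_real_abs (n : ℕ) (x y : ℝ) (hx : 0 ≤ x) (hy : 0 ≤ y) :
    (x ^ n + y ^ n) ^ (n + 1) + |x ^ n - y ^ n| ^ (n + 1) ≤
      2 * (x ^ (n + 1) + y ^ (n + 1)) ^ n := by
  rcases le_total (y ^ n) (x ^ n) with h | h
  · rw [abs_of_nonneg (by linarith)]; exact aux_real n x y hx hy
  · rw [abs_of_nonpos (by linarith), neg_sub, add_comm (x ^ n), add_comm (x ^ (n + 1))]
    exact aux_real n y x hy hx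

lemma aux_conv {f : ℝ → ℝ} (hf : ConvexOn ℝ (Set.Ici 0) f) {P Q U V : ℝ} (hV : 0 ≤ V)
    (hP : P ∈ Set.Icc V U) (hs : P + Q = U + V) : f P + f Q ≤ f U + f V := by
  rcases eq_or_lt_of_le (hP.1.trans hP.2) with h | h
  · have h1 : P = U := by linarith [hP.1, hP.2]
    have h2 : Q = V := by linarith
    rw [h1, h2]
  · have hUV : 0 < U - V := by linarith
    have hUV' : U - V ≠ 0 := hUV.ne'
    have hU : 0 ≤ U := by linarith
    have a1 : 0 ≤ (P - V) / (U - V) := div_nonneg (by linarith [hP.1]) hUV.le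
    have a2 : 0 ≤ (U - P) / (U - V) := div_nonneg (by linarith [hP.2]) hUV.le
    have a3 : (P - V) / (U - V) + (U - P) / (U - V) = 1 := by field_simp; ring
    have h1 := hf.2 (Set.mem_Ici.2 hU) (Set.mem_Ici.2 hV) a1 a2 a3
    have h2 := hf.2 (Set.mem_Ici.2 hV) (Set.mem_Ici.2 hU) a1 a2 a3
    have e1 : ((P - V) / (U - V)) • U + ((U - P) / (U - V)) • V = P := by
      simp only [smul_eq_mul]; field_simp; ring
    have e2 : ((P - V) / (U - V)) • V + ((U - P) / (U - V)) • U = Q := by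
      have : Q = U + V - P := by linarith
      rw [this]; simp only [smul_eq_mul]; field_simp; ring
    rw [e1] at h1; rw [e2] at h2
    simp only [smul_eq_mul] at h1 h2
    have := add_le_add h1 h2
    refine this.trans (le_of_eq ?_)
    linear_combination (f U + f V) * a3

lemma aux_cplx {𝕜 : Type*} [RCLike 𝕜] (m : ℕ) (hm : 2 ≤ m) (a b : 𝕜) :
    ‖a + b‖ ^ m + ‖a - b‖ ^ m ≤ (‖a‖ + ‖b‖) ^ m + |‖a‖ - ‖b‖| ^ m := by
  have hc : ConvexOn ℝ (Set.Ici 0) (fun t : ℝ => t ^ ((m : ℝ) / 2)) := by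
    apply convexOn_rpow
    have : (2 : ℝ) ≤ m := by exact_mod_cast hm
    linarith
  have hf : ∀ t : ℝ, 0 ≤ t → (t ^ 2) ^ ((m : ℝ) / 2) = t ^ m := by
    intro t ht
    rw [← Real.rpow_natCast t 2, ← Real.rpow_mul ht, ← Real.rpow_natCast]
    congr 1; push_cast; ring
  have par := parallelogram_law_with_norm ℝ a b
  have h := aux_conv hc (P := ‖a + b‖ ^ 2) (Q := ‖a - b‖ ^ 2) (U := (‖a‖ + ‖b‖) ^ 2)
    (V := |‖a‖ - ‖b‖| ^ 2) (by positivity)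
    ⟨by
      have : |‖a‖ - ‖b‖| ≤ ‖a + b‖ := by
        have := abs_norm_sub_norm_le a (-b)
        simpa using this
      gcongr, by
      have := norm_add_le a b
      gcongr⟩ (by rw [sq_abs]; linarith)
  rwa [hf _ (norm_nonneg _), hf _ (norm_nonneg _), hf _ (by positivity), hf _ (abs_nonneg _)] at h

lemma aux_two {𝕜 : Type*} [RCLike 𝕜] (n : ℕ) (hn : 1 ≤ n) (a b : 𝕜) :
    ‖a + b‖ ^ (n + 1) + ‖a - b‖ ^ (n + 1) ≤
      2 * (‖a‖ ^ (((n : ℝ) + 1) / n) + ‖b‖ ^ (((n : ℝ) + 1) / n)) ^ n := by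
  refine (aux_cplx (n + 1) (by omega) a b).trans ?_
  have hn' : (n : ℝ) ≠ 0 := by positivity
  have h := aux_real_abs n (‖a‖ ^ (1 / (n : ℝ))) (‖b‖ ^ (1 / (n : ℝ))) (by positivity)
    (by positivity)
  have e : ∀ t : ℝ, 0 ≤ t → (t ^ (1 / (n : ℝ))) ^ n = t := by
    intro t ht
    rw [← Real.rpow_natCast, ← Real.rpow_mul ht]; field_simp; simp
  have e' : ∀ t : ℝ, 0 ≤ t → (t ^ (1 / (n : ℝ))) ^ (n + 1) = t ^ (((n : ℝ) + 1) / n) := by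
    intro t ht
    rw [← Real.rpow_natCast, ← Real.rpow_mul ht]; congr 1; push_cast; field_simp
  rwa [e _ (norm_nonneg _), e _ (norm_nonneg _), e' _ (norm_nonneg _), e' _ (norm_nonneg _)] at h

/-- sum of a signed family -/
lemma aux_rad {𝕜 : Type*} [RCLike 𝕜] (n : ℕ) (hn : 1 ≤ n) (N : ℕ) (a : Fin N → 𝕜) :
    ∑ ε : Fin N → ℤˣ, ‖∑ i, (((ε i : ℤ) : 𝕜)) * a i‖ ^ (n + 1) ≤
      2 ^ N * (∑ i, ‖a i‖ ^ (((n : ℝ) + 1) / n)) ^ n := by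
  have hn0 : (n : ℝ) ≠ 0 := by positivity
  have hn1 : (1 : ℝ) ≤ n := by exact_mod_cast hn
  induction N with
  | zero => simp [show n ≠ 0 by omega]
  | succ N ih =>
    rw [← (Fin.consEquiv (fun _ => ℤˣ)).sum_comp, Fintype.sum_prod_type_right]
    simp only [Fin.consEquiv, Equiv.coe_fn_mk, Fin.sum_univ_succ, Fin.cons_zero, Fin.cons_succ]
    set S : (Fin N → ℤˣ) → 𝕜 := fun ε => ∑ i, (((ε i : ℤ) : 𝕜)) * a i.succ with hS
    set r : ℝ := ((n : ℝ) + 1) / n with hr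
    set T : ℝ := ∑ i : Fin N, ‖a i.succ‖ ^ r with hT
    have hT0 : 0 ≤ T := by positivity
    have huniv : ∀ g : ℤˣ → ℝ, ∑ s, g s = g 1 + g (-1) := by
      intro g
      rw [show (Finset.univ : Finset ℤˣ) = {1, -1} from by decide]
      rw [Finset.sum_pair (by decide)]
    simp only [huniv]
    have step : ∀ ε : Fin N → ℤˣ, ‖(((1 : ℤˣ) : ℤ) : 𝕜) * a 0 + S ε‖ ^ (n + 1) +
        ‖(((-1 : ℤˣ) : ℤ) : 𝕜) * a 0 + S ε‖ ^ (n + 1) ≤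
        2 * (‖S ε‖ ^ r + ‖a 0‖ ^ r) ^ n := by
      intro ε
      have := aux_two n hn (S ε) (a 0)
      refine le_trans (le_of_eq ?_) this
      congr 3
      · simp [add_comm]
      · simp; ring_nf
    refine (Finset.sum_le_sum fun ε _ => step ε).trans ?_
    rw [← Finset.mul_sum]
    have mink := Real.Lp_add_le_of_nonneg (s := (Finset.univ : Finset (Fin N → ℤˣ)))
      (f := fun ε => ‖S ε‖ ^ r) (g := fun _ => ‖a 0‖ ^ r) hn1 (fun _ _ => by positivity)
      (fun _ _ => by positivity)
    have e1 : ∀ ε, (‖S ε‖ ^ r) ^ (n : ℝ) = ‖S ε‖ ^ (n + 1) := by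
      intro ε
      rw [← Real.rpow_mul (norm_nonneg _), ← Real.rpow_natCast]
      congr 1; rw [hr]; push_cast; field_simp
    have ih' := ih (fun i => a i.succ)
    simp only [e1] at mink
    have cardN : (Finset.univ : Finset (Fin N → ℤˣ)).card = 2 ^ N := by
      simp [Finset.card_univ]
    have e3 : ∀ v : ℝ, 0 ≤ v → (2 ^ N * v ^ n) ^ (1 / (n : ℝ)) = (2 ^ N) ^ (1 / (n : ℝ)) * v := by
      intro v hv
      rw [Real.mul_rpow (by positivity) (by positivity), ← Real.rpow_natCast v,
        ← Real.rpow_mul hv]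
      field_simp; simp
    have b1 : (∑ ε, ‖S ε‖ ^ (n + 1)) ^ (1 / (n : ℝ)) ≤ (2 ^ N) ^ (1 / (n : ℝ)) * T := by
      rw [← e3 T hT0]
      exact Real.rpow_le_rpow (by positivity) ih' (by positivity)
    have b2 : (∑ _ε : Fin N → ℤˣ, (‖a 0‖ ^ r) ^ (n : ℝ)) ^ (1 / (n : ℝ)) =
        (2 ^ N) ^ (1 / (n : ℝ)) * ‖a 0‖ ^ r := by
      rw [← e3 _ (by positivity), Finset.sum_const, cardN, Real.rpow_natCast]
      simp
    rw [b2] at mink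
    have b3 : (∑ ε, (‖S ε‖ ^ r + ‖a 0‖ ^ r) ^ (n : ℝ)) ^ (1 / (n : ℝ)) ≤
        (2 ^ N * (‖a 0‖ ^ r + T) ^ n) ^ (1 / (n : ℝ)) := by
      rw [e3 _ (by positivity)]
      linarith
    rw [Real.rpow_le_rpow_iff (by positivity) (by positivity) (by positivity)] at b3
    simp only [Real.rpow_natCast] at b3
    rw [pow_succ]
    linarith

lemma aux_sum_rpow {ι : Type*} (s : Finset ι) (f : ι → ℝ) (hf : ∀ i, 0 ≤ f i) (t : ℝ)
    (ht : 1 ≤ t) : ∑ i ∈ s, f i ^ t ≤ (∑ i ∈ s, f i) ^ t := by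
  classical
  induction s using Finset.induction_on with
  | empty => simp [Real.zero_rpow (by linarith : t ≠ 0)]
  | insert a s ha ih =>
    rw [Finset.sum_insert ha, Finset.sum_insert ha]
    have := Real.add_rpow_le_rpow_add (hf a) (Finset.sum_nonneg fun i _ => hf i : 0 ≤ ∑ i ∈ s, f i) ht
    linarith

lemma aux_mink {ι κ : Type*} [Fintype ι] (s : Finset κ) (f : κ → ι → ℝ) (hf : ∀ k i, 0 ≤ f k i)
    (q : ℝ) (hq : 1 ≤ q) :
    (∑ i, (∑ k ∈ s, f k i) ^ q) ^ (1 / q) ≤ ∑ k ∈ s, (∑ i, f k i ^ q) ^ (1 / q) := by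
  classical
  induction s using Finset.induction_on with
  | empty => simp [Real.zero_rpow (by linarith : q ≠ 0), Real.zero_rpow (inv_ne_zero (by linarith : q ≠ 0))]
  | insert a s ha ih =>
    simp only [Finset.sum_insert ha]
    have := Real.Lp_add_le_of_nonneg (s := (Finset.univ : Finset ι)) (f := f a)
      (g := fun i => ∑ k ∈ s, f k i) hq (fun i _ => hf a i)
      (fun i _ => Finset.sum_nonneg fun k _ => hf k i)
    linarith

lemma aux_vec {𝕜 : Type*} [RCLike 𝕜] (p : ℝ) (m : ℕ) (hm : 2 ≤ m)
    (hp1 : 1 ≤ p) (hpm : p ≤ (m : ℝ) / ((m : ℝ) - 1)) [Fact (1 ≤ ENNReal.ofReal p)]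
    (x : Fin m → lp (fun _ : ℕ => 𝕜) (ENNReal.ofReal p)) :
    ∑ ε : Fin m → ℤˣ, ‖∑ i, (((ε i : ℤ) : 𝕜)) • x i‖ ^ m ≤
      2 ^ m * (∑ i, ‖x i‖ ^ p) ^ ((m : ℝ) / p) := by
  obtain ⟨n, rfl⟩ : ∃ n, m = n + 1 := ⟨m - 1, by omega⟩
  have hn : 1 ≤ n := by omega
  have hn1 : (1 : ℝ) ≤ n := by exact_mod_cast hn
  have hp0 : 0 < p := by linarith
  have htr : (ENNReal.ofReal p).toReal = p := ENNReal.toReal_ofReal hp0.le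
  have htr0 : 0 < (ENNReal.ofReal p).toReal := by rwa [htr]
  push_cast at hpm ⊢
  rw [add_sub_cancel_right] at hpm
  set r : ℝ := ((n : ℝ) + 1) / n with hr
  set q : ℝ := ((n : ℝ) + 1) / p with hq
  have hr0 : 0 < r := by positivity
  have hrn : r ≤ n + 1 := by
    rw [hr, div_le_iff₀ (by linarith)]; nlinarith
  have hq1 : 1 ≤ q := by rw [hq, le_div_iff₀ hp0]; linarith
  have hq0 : 0 < q := by linarith
  set S : (Fin (n + 1) → ℤˣ) → lp (fun _ : ℕ => 𝕜) (ENNReal.ofReal p) :=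
    fun ε => ∑ i, (((ε i : ℤ) : 𝕜)) • x i with hS
  have hSk : ∀ ε k, S ε k = ∑ i, (((ε i : ℤ) : 𝕜)) * x i k := by
    intro ε k
    have h := map_sum (lp.evalCLM 𝕜 (fun _ : ℕ => 𝕜) (ENNReal.ofReal p) k)
      (fun i => (((ε i : ℤ) : 𝕜)) • x i) Finset.univ
    simp only [map_smul, smul_eq_mul] at h
    exact h
  have h1 : ∀ k, (∑ ε, (‖S ε k‖ ^ p) ^ q) ^ (1 / q) ≤
      (2 ^ (n + 1)) ^ (1 / q) * ∑ i, ‖x i k‖ ^ p := by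
    intro k
    have := aux_rad n hn (n + 1) (fun i => x i k)
    have e1 : ∀ ε, (‖S ε k‖ ^ p) ^ q = ‖S ε k‖ ^ (n + 1) := by
      intro ε
      rw [← Real.rpow_mul (norm_nonneg _), ← Real.rpow_natCast]
      congr 1; rw [hq]; push_cast; field_simp
    simp only [e1]
    simp only [← hSk] at this
    have h2 : ∑ i, ‖x i k‖ ^ r ≤ (∑ i, ‖x i k‖ ^ p) ^ (r / p) := by
      have := aux_sum_rpow Finset.univ (fun i => ‖x i k‖ ^ p) (fun i => by positivity) (r / p)
        (by rw [le_div_iff₀ hp0]; linarith)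
      refine le_trans (le_of_eq ?_) this
      refine Finset.sum_congr rfl fun i _ => ?_
      rw [← Real.rpow_mul (norm_nonneg _)]
      congr 1; field_simp
    have h3 : ∑ ε, ‖S ε k‖ ^ (n + 1) ≤ 2 ^ (n + 1) * ((∑ i, ‖x i k‖ ^ p) ^ (r / p)) ^ n :=
      this.trans (by gcongr)
    refine (Real.rpow_le_rpow (by positivity) h3 (by positivity)).trans (le_of_eq ?_)
    rw [Real.mul_rpow (by positivity) (by positivity), ← Real.rpow_natCast _ n,
      ← Real.rpow_mul (by positivity), ← Real.rpow_mul (by positivity)]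
    have : r / p * (n * (1 / q)) = 1 := by rw [hr, hq]; field_simp
    rw [this, Real.rpow_one]
  have h2 : ∀ K : Finset ℕ, (∑ ε, (∑ k ∈ K, ‖S ε k‖ ^ p) ^ q) ^ (1 / q) ≤
      (2 ^ (n + 1)) ^ (1 / q) * ∑ i, ‖x i‖ ^ p := by
    intro K
    refine (aux_mink K (fun k ε => ‖S ε k‖ ^ p) (fun _ _ => by positivity) q hq1).trans ?_
    refine (Finset.sum_le_sum fun k _ => h1 k).trans ?_
    rw [← Finset.mul_sum, Finset.sum_comm]
    refine mul_le_mul_of_nonneg_left (Finset.sum_le_sum fun i _ => ?_) (by positivity)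
    have := lp.sum_rpow_le_norm_rpow htr0 (x i) K
    rwa [htr] at this
  have lim : Filter.Tendsto (fun K : Finset ℕ => (∑ ε, (∑ k ∈ K, ‖S ε k‖ ^ p) ^ q) ^ (1 / q))
      Filter.atTop (nhds ((∑ ε, (‖S ε‖ ^ p) ^ q) ^ (1 / q))) := by
    refine Filter.Tendsto.rpow_const (tendsto_finsetSum _ fun ε _ => ?_) (Or.inr (by positivity))
    refine Filter.Tendsto.rpow_const ?_ (Or.inr hq0.le)
    have := lp.hasSum_norm htr0 (S ε)
    rw [htr] at this
    exact this
  have h3 := le_of_tendsto' lim h2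
  have e1 : ∀ ε, (‖S ε‖ ^ p) ^ q = ‖S ε‖ ^ (n + 1) := by
    intro ε
    rw [← Real.rpow_mul (norm_nonneg _), ← Real.rpow_natCast]
    congr 1; rw [hq]; push_cast; field_simp
  simp only [e1] at h3
  have h4 := Real.rpow_le_rpow (by positivity) h3 hq0.le
  rw [← Real.rpow_mul (by positivity), Real.mul_rpow (by positivity) (by positivity),
    ← Real.rpow_mul (by positivity), one_div_mul_cancel hq0.ne', Real.rpow_one, Real.rpow_one] at h4
  exact h4

lemma aux_polar {𝕜 E : Type*} [RCLike 𝕜] [AddCommGroup E] [Module 𝕜 E] (m : ℕ)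
    (B : MultilinearMap 𝕜 (fun _ : Fin m => E) 𝕜)
    (hB : ∀ (σ : Equiv.Perm (Fin m)) (v : Fin m → E), B (v ∘ σ) = B v) (x : Fin m → E) :
    ∑ ε : Fin m → ℤˣ, (∏ i, ((ε i : ℤ) : 𝕜)) * B (fun _ => ∑ i, ((ε i : ℤ) : 𝕜) • x i) =
      2 ^ m * m.factorial * B x := by
  have h1 : ∀ ε : Fin m → ℤˣ, B (fun _ => ∑ i, ((ε i : ℤ) : 𝕜) • x i) =
      ∑ f : Fin m → Fin m, (∏ j, ((ε (f j) : ℤ) : 𝕜)) * B (fun j => x (f j)) := by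
    intro ε
    rw [B.map_sum]
    refine Finset.sum_congr rfl fun f _ => ?_
    rw [B.map_smul_univ (fun j => ((ε (f j) : ℤ) : 𝕜)) (fun j => x (f j)), smul_eq_mul]
  simp only [h1, Finset.mul_sum]
  rw [Finset.sum_comm]
  simp only [← mul_assoc, ← Finset.sum_mul]
  have h2 : ∀ f : Fin m → Fin m, ¬ Function.Bijective f →
      ∑ ε : Fin m → ℤˣ, (∏ i, ((ε i : ℤ) : 𝕜)) * (∏ j, ((ε (f j) : ℤ) : 𝕜)) = 0 := by
    intro f hf
    have : ¬ Function.Surjective f := fun h => hf (Finite.surjective_iff_bijective.1 h)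
    simp only [Function.Surjective, not_forall, not_exists] at this
    obtain ⟨i₀, hi₀⟩ := this
    have e : ∀ ε : Fin m → ℤˣ, (∏ i, ((ε i : ℤ) : 𝕜)) * (∏ j, ((ε (f j) : ℤ) : 𝕜)) =
        ∏ i, (((ε i : ℤ) : 𝕜) * ∏ j with f j = i, ((ε i : ℤ) : 𝕜)) := by
      intro ε
      rw [Finset.prod_mul_distrib]
      congr 1
      rw [← Finset.prod_fiberwise (Finset.univ) f]
      refine Finset.prod_congr rfl fun i _ => Finset.prod_congr rfl fun j hj => ?_
      rw [(Finset.mem_filter.1 hj).2]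
    simp only [e]
    rw [← Fintype.prod_sum (fun (i : Fin m) (s : ℤˣ) =>
      ((s : ℤ) : 𝕜) * ∏ j with f j = i, ((s : ℤ) : 𝕜))]
    refine Finset.prod_eq_zero (Finset.mem_univ i₀) ?_
    rw [show (Finset.univ : Finset ℤˣ) = {1, -1} from by decide]
    rw [Finset.sum_pair (by decide), Finset.filter_false_of_mem (fun j _ => hi₀ j)]
    simp
  rw [← Finset.sum_subset (Finset.subset_univ (Finset.univ.filter fun f : Fin m → Fin m =>
    Function.Bijective f)) (by
      intro f _ hf
      rw [h2 f (by simpa using hf), zero_mul])]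
  have h3 : ∑ σ : Equiv.Perm (Fin m), (2 : 𝕜) ^ m * B x = 2 ^ m * m.factorial * B x := by
    simp [Fintype.card_perm]; ring
  rw [← h3]
  symm
  refine Finset.sum_bij (fun σ _ => (σ : Fin m → Fin m)) (fun σ _ => Finset.mem_filter.2 ⟨Finset.mem_univ _, σ.bijective⟩)
    (fun σ _ τ _ h => DFunLike.coe_injective h)
    (fun f hf => ⟨Equiv.ofBijective f (Finset.mem_filter.1 hf).2, Finset.mem_univ _, rfl⟩) ?_
  intro σ _
  have h4 : ∀ ε : Fin m → ℤˣ, (∏ i, ((ε i : ℤ) : 𝕜)) * (∏ j, ((ε (σ j) : ℤ) : 𝕜)) = 1 := by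
    intro ε
    rw [Equiv.prod_comp σ (fun j => ((ε j : ℤ) : 𝕜)), ← Finset.prod_mul_distrib]
    refine Finset.prod_eq_one fun i _ => ?_
    rcases Int.units_eq_one_or (ε i) with h | h <;> simp [h]
  simp only [h4]
  have := hB σ x
  simp only [Function.comp_def] at this
  rw [this]
  simp

lemma aux_bdd {𝕜 : Type*} [RCLike 𝕜] {E : Type*} [NormedAddCommGroup E] [NormedSpace 𝕜 E] (m : ℕ)
    (B : ContinuousMultilinearMap 𝕜 (fun _ : Fin m => E) 𝕜) :
    BddAbove ((fun u => ‖B (fun _ => u)‖) '' closedBall (0 : E) 1) := by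
  refine ⟨‖B‖, ?_⟩
  rintro _ ⟨u, hu, rfl⟩
  have hu' : ‖u‖ ≤ 1 := by simpa using hu
  refine (B.le_opNorm _).trans ?_
  simp only [Finset.prod_const]
  exact mul_le_of_le_one_right (norm_nonneg _) (pow_le_one₀ (norm_nonneg _) hu')

lemma aux_hom {𝕜 : Type*} [RCLike 𝕜] {E : Type*} [NormedAddCommGroup E] [NormedSpace 𝕜 E] (m : ℕ)
    (hm : 2 ≤ m) (B : ContinuousMultilinearMap 𝕜 (fun _ : Fin m => E) 𝕜) (u : E) :
    ‖B (fun _ => u)‖ ≤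
      sSup ((fun u => ‖B (fun _ => u)‖) '' closedBall (0 : E) 1) * ‖u‖ ^ m := by
  by_cases hu : u = 0
  · subst hu
    have : B (fun _ => (0 : E)) = 0 := B.map_coord_zero (⟨0, by omega⟩ : Fin m) rfl
    rw [this]; simp [show m ≠ 0 by omega]
  · have hn : ‖u‖ ≠ 0 := norm_ne_zero_iff.2 hu
    have hn' : (‖u‖ : 𝕜) ≠ 0 := by exact_mod_cast hn
    set w : E := ((‖u‖ : 𝕜)⁻¹) • u with hw
    have hwn : ‖w‖ = 1 := by rw [hw, norm_smul]; simp [hn]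
    have e : B (fun _ => u) = (‖u‖ : 𝕜) ^ m * B (fun _ => w) := by
      have := B.map_smul_univ (fun _ => (‖u‖ : 𝕜)) (fun _ => w)
      simp only [hw, smul_inv_smul₀ hn'] at this
      rw [this]; simp [hw]
    rw [e, norm_mul, norm_pow, RCLike.norm_ofReal, abs_norm, mul_comm]
    refine mul_le_mul_of_nonneg_right ?_ (by positivity)
    exact le_csSup (aux_bdd m B) ⟨w, by simp [hwn], rfl⟩

lemma aux_main {𝕜 : Type*} [RCLike 𝕜] (p : ℝ) (m : ℕ) (hm : 2 ≤ m)
    (hp1 : 1 ≤ p) (hpm : p ≤ (m : ℝ) / ((m : ℝ) - 1)) [Fact (1 ≤ ENNReal.ofReal p)]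
    (B : ContinuousMultilinearMap 𝕜
          (fun _ : Fin m => lp (fun _ : ℕ => 𝕜) (ENNReal.ofReal p)) 𝕜)
    (hB : ∀ (σ : Equiv.Perm (Fin m)) (v : Fin m → lp (fun _ : ℕ => 𝕜) (ENNReal.ofReal p)),
          B (v ∘ σ) = B v) :
    ‖B‖ ≤ (m : ℝ) ^ ((m : ℝ) / p) / (m.factorial : ℝ) *
      sSup ((fun u => ‖B (fun _ => u)‖) ''
            closedBall (0 : lp (fun _ : ℕ => 𝕜) (ENNReal.ofReal p)) 1) := by
  set s := sSup ((fun u => ‖B (fun _ => u)‖) ''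
            closedBall (0 : lp (fun _ : ℕ => 𝕜) (ENNReal.ofReal p)) 1) with hs
  have hs0 : 0 ≤ s := Real.sSup_nonneg (by rintro _ ⟨u, _, rfl⟩; exact norm_nonneg _)
  have hfac : (0 : ℝ) < m.factorial := by positivity
  have unit : ∀ y : Fin m → lp (fun _ : ℕ => 𝕜) (ENNReal.ofReal p), (∀ i, ‖y i‖ = 1) →
      ‖B y‖ ≤ (m : ℝ) ^ ((m : ℝ) / p) / (m.factorial : ℝ) * s := by
    intro y hy
    have h := aux_polar m B.toMultilinearMap hB y
    have hv := aux_vec p m hm hp1 hpm y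
    simp only [hy, Real.one_rpow, Finset.sum_const, Finset.card_univ, Fintype.card_fin,
      nsmul_eq_mul, mul_one] at hv
    have h1 : ‖(2 ^ m * m.factorial * B y : 𝕜)‖ ≤ s * (2 ^ m * (m : ℝ) ^ ((m : ℝ) / p)) := by
      change _ = 2 ^ m * m.factorial * B y at h
      rw [← h]
      refine (norm_sum_le _ _).trans ?_
      refine le_trans ?_ (mul_le_mul_of_nonneg_left hv hs0)
      rw [Finset.mul_sum]
      refine Finset.sum_le_sum fun ε _ => ?_
      have hone : ‖∏ i, ((ε i : ℤ) : 𝕜)‖ = 1 := by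
        rw [norm_prod]
        refine Finset.prod_eq_one fun i _ => ?_
        rcases Int.units_eq_one_or (ε i) with h | h <;> simp [h]
      rw [norm_mul, hone, one_mul]
      exact aux_hom m hm B _
    rw [norm_mul, norm_mul, norm_pow, RCLike.norm_natCast, RCLike.norm_ofNat] at h1
    rw [div_mul_eq_mul_div, le_div_iff₀ hfac]
    have h2 : (0 : ℝ) < 2 ^ m := by positivity
    refine le_of_mul_le_mul_left ?_ h2
    linarith
  refine B.opNorm_le_bound (by positivity) fun x => ?_
  by_cases hx : ∃ i, x i = 0
  · obtain ⟨i, hi⟩ := hx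
    rw [B.map_coord_zero i hi, norm_zero]
    positivity
  · push Not at hx
    have hn : ∀ i, ‖x i‖ ≠ 0 := fun i => norm_ne_zero_iff.2 (hx i)
    have hn' : ∀ i, (‖x i‖ : 𝕜) ≠ 0 := fun i => by exact_mod_cast hn i
    have h := unit (fun i => ((‖x i‖ : 𝕜)⁻¹) • x i) (fun i => by rw [norm_smul]; simp [hn i])
    have e : B x = (∏ i, (‖x i‖ : 𝕜)) * B (fun i => ((‖x i‖ : 𝕜)⁻¹) • x i) := by
      have := B.map_smul_univ (fun i => (‖x i‖ : 𝕜)) (fun i => ((‖x i‖ : 𝕜)⁻¹) • x i)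
      simp only [smul_inv_smul₀ (hn' _)] at this
      exact this
    rw [e, norm_mul, norm_prod]
    simp only [RCLike.norm_ofReal, abs_norm]
    rw [mul_comm]
    exact mul_le_mul_of_nonneg_right h (by positivity)

lemma aux_L {𝕜 : Type*} [RCLike 𝕜] (p : ℝ) (m : ℕ) [Fact (1 ≤ ENNReal.ofReal p)] :
    ∃ L : ContinuousMultilinearMap 𝕜
        (fun _ : Fin m => lp (fun _ : ℕ => 𝕜) (ENNReal.ofReal p)) 𝕜,
      (∀ (σ : Equiv.Perm (Fin m)) (v : Fin m → lp (fun _ : ℕ => 𝕜) (ENNReal.ofReal p)),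
        L (v ∘ σ) = L v) ∧
      (∀ v, L v = (m.factorial : 𝕜)⁻¹ *
        ∑ σ : Equiv.Perm (Fin m), ∏ i : Fin m, v i ((σ i : ℕ))) := by
  set L : ContinuousMultilinearMap 𝕜
        (fun _ : Fin m => lp (fun _ : ℕ => 𝕜) (ENNReal.ofReal p)) 𝕜 :=
    (m.factorial : 𝕜)⁻¹ • ∑ σ : Equiv.Perm (Fin m),
      (ContinuousMultilinearMap.mkPiAlgebra 𝕜 (Fin m) 𝕜).compContinuousLinearMap
        (fun i => lp.evalCLM 𝕜 (fun _ : ℕ => 𝕜) (ENNReal.ofReal p) (σ i : ℕ)) with hL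
  have hform : ∀ v, L v = (m.factorial : 𝕜)⁻¹ *
        ∑ σ : Equiv.Perm (Fin m), ∏ i : Fin m, v i ((σ i : ℕ)) := by
    intro v
    rw [hL, ContinuousMultilinearMap.smul_apply, ContinuousMultilinearMap.sum_apply, smul_eq_mul]
    rfl
  refine ⟨L, fun τ v => ?_, hform⟩
  rw [hform, hform]
  congr 1
  rw [← Equiv.sum_comp (Equiv.mulRight τ)]
  refine Finset.sum_congr rfl fun σ _ => ?_
  exact Equiv.prod_comp τ (fun i => (v i) ((σ i : ℕ)))

lemma aux_diag {𝕜 : Type*} [RCLike 𝕜] (p : ℝ) (m : ℕ) [Fact (1 ≤ ENNReal.ofReal p)]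
    (L : ContinuousMultilinearMap 𝕜
        (fun _ : Fin m => lp (fun _ : ℕ => 𝕜) (ENNReal.ofReal p)) 𝕜)
    (hform : ∀ v, L v = (m.factorial : 𝕜)⁻¹ *
        ∑ σ : Equiv.Perm (Fin m), ∏ i : Fin m, v i ((σ i : ℕ)))
    (u : lp (fun _ : ℕ => 𝕜) (ENNReal.ofReal p)) :
    L (fun _ => u) = ∏ i : Fin m, u (i : ℕ) := by
  rw [hform]
  have : ∀ σ : Equiv.Perm (Fin m), ∏ i : Fin m, u ((σ i : ℕ)) = ∏ i : Fin m, u (i : ℕ) :=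
    fun σ => Equiv.prod_comp σ (fun i : Fin m => u (i : ℕ))
  simp only [this]
  have hf : (m.factorial : 𝕜) ≠ 0 := by exact_mod_cast m.factorial_ne_zero
  rw [Finset.sum_const, Finset.card_univ, Fintype.card_perm, Fintype.card_fin, nsmul_eq_mul,
    inv_mul_cancel_left₀ hf]

lemma aux_sup {𝕜 : Type*} [RCLike 𝕜] (p : ℝ) (m : ℕ) (hm : 2 ≤ m) (hp1 : 1 ≤ p)
    [Fact (1 ≤ ENNReal.ofReal p)]
    (L : ContinuousMultilinearMap 𝕜
        (fun _ : Fin m => lp (fun _ : ℕ => 𝕜) (ENNReal.ofReal p)) 𝕜)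
    (hform : ∀ v, L v = (m.factorial : 𝕜)⁻¹ *
        ∑ σ : Equiv.Perm (Fin m), ∏ i : Fin m, v i ((σ i : ℕ))) :
    sSup ((fun u => ‖L (fun _ => u)‖) ''
          closedBall (0 : lp (fun _ : ℕ => 𝕜) (ENNReal.ofReal p)) 1)
        = (m : ℝ) ^ (-(m : ℝ) / p) := by
  have hm0 : (0 : ℝ) < m := by positivity
  have hp0 : 0 < p := by linarith
  have htr : (ENNReal.ofReal p).toReal = p := ENNReal.toReal_ofReal hp0.le
  have htr0 : 0 < (ENNReal.ofReal p).toReal := by rwa [htr]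
  refine IsGreatest.csSup_eq ⟨?_, ?_⟩
  · set c : ℝ := (m : ℝ) ^ (-1 / p) with hc
    have hc0 : 0 ≤ c := by positivity
    set u : lp (fun _ : ℕ => 𝕜) (ENNReal.ofReal p) :=
      ∑ i ∈ Finset.range m, lp.single (ENNReal.ofReal p) i ((c : ℝ) : 𝕜) with hu
    refine ⟨u, ?_, ?_⟩
    · have h := lp.norm_sum_single htr0 (fun _ : ℕ => ((c : ℝ) : 𝕜)) (Finset.range m)
      rw [htr] at h
      have h1 : ‖u‖ ^ p = 1 := by
        rw [hu, h]
        simp only [RCLike.norm_ofReal, abs_of_nonneg hc0, Finset.sum_const, Finset.card_range,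
          nsmul_eq_mul]
        rw [hc, ← Real.rpow_mul hm0.le, div_mul_cancel₀ _ hp0.ne', Real.rpow_neg_one,
          mul_inv_cancel₀ hm0.ne']
      have h2 : ‖u‖ = 1 := by
        have h3 : (‖u‖ ^ p) ^ p⁻¹ = ‖u‖ := Real.rpow_rpow_inv (norm_nonneg _) hp0.ne'
        rw [← h3, h1, Real.one_rpow]
      simp [h2]
    · have hui : ∀ i : Fin m, u (i : ℕ) = ((c : ℝ) : 𝕜) := by
        intro i
        have h := map_sum (lp.evalCLM 𝕜 (fun _ : ℕ => 𝕜) (ENNReal.ofReal p) (i : ℕ))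
          (fun j => lp.single (ENNReal.ofReal p) j ((c : ℝ) : 𝕜)) (Finset.range m)
        change u (i : ℕ) = ∑ j ∈ Finset.range m,
          (lp.single (E := fun _ : ℕ => 𝕜) (ENNReal.ofReal p) j ((c : ℝ) : 𝕜)) (i : ℕ) at h
        rw [h, Finset.sum_eq_single (i : ℕ)]
        · exact lp.single_apply_self (E := fun _ : ℕ => 𝕜) _ _ _
        · intro j _ hj
          exact lp.single_apply_ne (E := fun _ : ℕ => 𝕜) _ _ _ (Ne.symm hj)
        · intro hi; exact absurd (Finset.mem_range.2 i.2) hi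
      simp only [aux_diag p m L hform, hui,
        Finset.prod_const, Finset.card_univ, Fintype.card_fin]
      rw [norm_pow, RCLike.norm_ofReal, abs_of_nonneg hc0, hc, ← Real.rpow_natCast, ← Real.rpow_mul hm0.le]
      congr 1; ring
  · rintro _ ⟨u, hu, rfl⟩
    have hu' : ‖u‖ ≤ 1 := by simpa using hu
    simp only [aux_diag p m L hform, norm_prod]
    have hsum : ∑ i : Fin m, ‖u (i : ℕ)‖ ^ p ≤ 1 := by
      have h := lp.sum_rpow_le_norm_rpow htr0 u (Finset.range m)
      rw [htr, Finset.sum_range (fun i => ‖u i‖ ^ p)] at h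
      exact h.trans (Real.rpow_le_one (norm_nonneg _) hu' hp0.le)
    have h := Real.geom_mean_le_arith_mean_weighted (Finset.univ : Finset (Fin m))
      (fun _ => 1 / (m : ℝ)) (fun i => ‖u (i : ℕ)‖ ^ p) (fun _ _ => by positivity)
      (by simp [hm0.ne']) (fun _ _ => by positivity)
    rw [Real.finsetProd_rpow _ _ (fun _ _ => by positivity),
      Real.finsetProd_rpow _ _ (fun _ _ => by positivity), ← Finset.mul_sum] at h
    have hP : 0 ≤ ∏ i : Fin m, ‖u (i : ℕ)‖ := by positivity
    rw [← Real.rpow_mul hP] at h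
    have h2 : (∏ i : Fin m, ‖u (i : ℕ)‖) ^ (p * (1 / (m : ℝ))) ≤ (m : ℝ)⁻¹ := by
      refine h.trans ?_
      rw [one_div]
      exact mul_le_of_le_one_right (by positivity) hsum
    have h3 := Real.rpow_le_rpow (by positivity) h2 (show 0 ≤ (m : ℝ) / p by positivity)
    rw [← Real.rpow_mul hP, ← Real.rpow_neg_one, ← Real.rpow_mul hm0.le] at h3
    have e1 : p * (1 / (m : ℝ)) * (m / p) = 1 := by field_simp
    rw [e1, Real.rpow_one] at h3
    refine h3.trans (le_of_eq ?_)
    congr 1; ring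

lemma aux_lower {𝕜 : Type*} [RCLike 𝕜] (p : ℝ) (m : ℕ) (hm : 2 ≤ m) (hp1 : 1 ≤ p)
    [Fact (1 ≤ ENNReal.ofReal p)]
    (L : ContinuousMultilinearMap 𝕜
        (fun _ : Fin m => lp (fun _ : ℕ => 𝕜) (ENNReal.ofReal p)) 𝕜)
    (hform : ∀ v, L v = (m.factorial : 𝕜)⁻¹ *
        ∑ σ : Equiv.Perm (Fin m), ∏ i : Fin m, v i ((σ i : ℕ))) :
    1 / (m.factorial : ℝ) ≤ ‖L‖ := by
  have hp0 : 0 < p := by linarith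
  set v : Fin m → lp (fun _ : ℕ => 𝕜) (ENNReal.ofReal p) :=
    fun i => lp.single (ENNReal.ofReal p) (i : ℕ) (1 : 𝕜) with hv
  have h := L.le_opNorm v
  have hn : ∀ i, ‖v i‖ = 1 := by
    intro i
    rw [hv]
    rw [lp.norm_single (by simpa using hp0)]
    simp
  simp only [hn, Finset.prod_const_one, mul_one] at h
  refine le_trans (le_of_eq ?_) h
  rw [hform, Finset.sum_eq_single 1]
  · have : ∀ i : Fin m, v i ((((1 : Equiv.Perm (Fin m)) i : Fin m) : ℕ)) = 1 := fun i =>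
      lp.single_apply_self (E := fun _ : ℕ => 𝕜) _ _ _
    simp only [this]
    simp
  · intro σ _ hσ
    obtain ⟨i, hi⟩ : ∃ i, σ i ≠ i := by
      by_contra! hcon
      exact hσ (Equiv.ext hcon)
    refine Finset.prod_eq_zero (Finset.mem_univ i) ?_
    exact lp.single_apply_ne (E := fun _ : ℕ => 𝕜) _ _ _ (fun h => hi (Fin.ext h))
  · intro h; exact absurd (Finset.mem_univ _) h

/-- Sharpness of the polarization constant of `ℓ_p` for `1 ≤ p ≤ m' = m/(m-1)`:
the symmetric `m`-linear form `L(x₁,…,x_m) = (1/m!) Σ_σ x_{1σ(1)}⋯x_{mσ(m)}`, whose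
associated polynomial is `L̂(u) = u₁⋯u_m`, satisfies `‖L‖ = 1/m!`, `‖L̂‖ = m^{-m/p}`,
hence `‖L‖ = (m^{m/p}/m!) ‖L̂‖`; consequently the `m`-th polarization constant of
`ℓ_p` equals `m^{m/p}/m!`. -/
theorem polarization_constant_lp_small_p
    {𝕜 : Type*} [RCLike 𝕜] (p : ℝ) (m : ℕ) (hm : 2 ≤ m)
    (hp1 : 1 ≤ p) (hpm : p ≤ (m : ℝ) / ((m : ℝ) - 1)) [Fact (1 ≤ ENNReal.ofReal p)] :
    (∃ L : ContinuousMultilinearMap 𝕜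
        (fun _ : Fin m => lp (fun _ : ℕ => 𝕜) (ENNReal.ofReal p)) 𝕜,
      (∀ (σ : Equiv.Perm (Fin m)) (v : Fin m → lp (fun _ : ℕ => 𝕜) (ENNReal.ofReal p)),
        L (v ∘ σ) = L v) ∧
      (∀ v, L v = (m.factorial : 𝕜)⁻¹ *
        ∑ σ : Equiv.Perm (Fin m), ∏ i : Fin m, v i ((σ i : ℕ))) ∧
      ‖L‖ = 1 / (m.factorial : ℝ) ∧
      sSup ((fun u => ‖L (fun _ => u)‖) ''
          closedBall (0 : lp (fun _ : ℕ => 𝕜) (ENNReal.ofReal p)) 1)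
        = (m : ℝ) ^ (-(m : ℝ) / p) ∧
      ‖L‖ = (m : ℝ) ^ ((m : ℝ) / p) / (m.factorial : ℝ)
        * sSup ((fun u => ‖L (fun _ => u)‖) ''
            closedBall (0 : lp (fun _ : ℕ => 𝕜) (ENNReal.ofReal p)) 1)) ∧
    sInf {M : ℝ |
        ∀ B : ContinuousMultilinearMap 𝕜
          (fun _ : Fin m => lp (fun _ : ℕ => 𝕜) (ENNReal.ofReal p)) 𝕜,
        (∀ (σ : Equiv.Perm (Fin m)) (v : Fin m → lp (fun _ : ℕ => 𝕜) (ENNReal.ofReal p)),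
          B (v ∘ σ) = B v) →
        ‖B‖ ≤ M * sSup ((fun u => ‖B (fun _ => u)‖) ''
            closedBall (0 : lp (fun _ : ℕ => 𝕜) (ENNReal.ofReal p)) 1)}
      = (m : ℝ) ^ ((m : ℝ) / p) / (m.factorial : ℝ) := by
  have hm0 : (0 : ℝ) < m := by positivity
  have hp0 : 0 < p := by linarith
  obtain ⟨L, hsym, hform⟩ := aux_L (𝕜 := 𝕜) p m
  have hsup := aux_sup p m hm hp1 L hform
  have hfac : (0 : ℝ) < m.factorial := by positivity
  have hcancel : (m : ℝ) ^ ((m : ℝ) / p) * (m : ℝ) ^ (-(m : ℝ) / p) = 1 := by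
    rw [← Real.rpow_add hm0, neg_div, add_neg_cancel, Real.rpow_zero]
  have hnorm : ‖L‖ = 1 / (m.factorial : ℝ) := by
    refine le_antisymm ?_ (aux_lower p m hm hp1 L hform)
    refine (aux_main p m hm hp1 hpm L hsym).trans (le_of_eq ?_)
    rw [hsup, div_mul_eq_mul_div, hcancel]
  refine ⟨⟨L, hsym, hform, hnorm, hsup, ?_⟩, ?_⟩
  · rw [hnorm, hsup, div_mul_eq_mul_div, hcancel]
  · refine IsLeast.csInf_eq ⟨fun B hB => aux_main p m hm hp1 hpm B hB, fun M hM => ?_⟩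
    have h := hM L hsym
    rw [hsup, hnorm] at h
    have h2 := mul_le_mul_of_nonneg_left h
      (show 0 ≤ (m : ℝ) ^ ((m : ℝ) / p) by positivity)
    calc _ = (m : ℝ) ^ ((m : ℝ) / p) * (1 / (m.factorial : ℝ)) := by ring
      _ ≤ _ := h2
      _ = M * ((m : ℝ) ^ ((m : ℝ) / p) * (m : ℝ) ^ (-(m : ℝ) / p)) := by ring
      _ = M := by rw [hcancel, mul_one]
end

section
/- Let 1 ≤ p ≤ 2. On the real or complex sequence space ℓ_p, every continuous symmetric bilinear form B satisfies ‖B‖ ≤ 2^{(2−p)/p}·‖B̂‖, and the symmetric bilinear form L(x,y) = (x₁y₂ + x₂y₁)/2, with associated 2-homogeneous polynomial L̂(x) = x₁x₂, satisfies ‖L‖ = 2^{(2−p)/p}·‖L̂‖ (indeed ‖L‖ = 1/2 and ‖L̂‖ = 2^{−2/p}); hence the 2nd polarization constant of ℓ_p equals 2^{(2−p)/p}. -/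
open Metric
open scoped ENNReal

lemma mink_aux {r : ℝ} (hr : 1 ≤ r) {a b g : ℕ → ℝ} {A B G : ℝ} (ha : HasSum a A) (hb : HasSum b B)
    (hg : HasSum g G) (ha0 : ∀ i, 0 ≤ a i) (hb0 : ∀ i, 0 ≤ b i)
    (h : ∀ i, (a i ^ r + b i ^ r) ^ (1 / r) ≤ g i) : (A ^ r + B ^ r) ^ (1 / r) ≤ G := by
  have hr0 : 0 < r := by linarith
  haveI : Fact (1 ≤ ENNReal.ofReal r) := ⟨by simpa using hr⟩
  have hA : 0 ≤ A := ha.nonneg ha0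
  have hB : 0 ≤ B := hb.nonneg hb0
  have key : ∀ u v : ℝ, 0 ≤ u → 0 ≤ v →
      ‖(WithLp.toLp (ENNReal.ofReal r) ![u, v] : PiLp (ENNReal.ofReal r) (fun _ : Fin 2 => ℝ))‖
        = (u ^ r + v ^ r) ^ (1 / r) := by
    intro u v hu hv
    rw [PiLp.norm_eq_sum (by rw [ENNReal.toReal_ofReal hr0.le]; exact hr0)]
    simp [ENNReal.toReal_ofReal hr0.le, Fin.sum_univ_two, abs_of_nonneg hu, abs_of_nonneg hv]
  have hs : HasSum (fun i => (WithLp.toLp (ENNReal.ofReal r) ![a i, b i] :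
      PiLp (ENNReal.ofReal r) (fun _ : Fin 2 => ℝ))) (WithLp.toLp (ENNReal.ofReal r) ![A, B]) := by
    have h1 : HasSum (fun i => (![a i, b i] : Fin 2 → ℝ)) ![A, B] := by
      rw [Pi.hasSum]
      intro j
      fin_cases j
      · simpa using ha
      · simpa using hb
    exact (PiLp.continuousLinearEquiv (ENNReal.ofReal r) ℝ (fun _ : Fin 2 => ℝ)).symm.hasSum'.mpr
      (by simpa using h1)
  rw [← key A B hA hB]
  exact hs.norm_le_of_bounded hg fun i => by rw [key _ _ (ha0 i) (hb0 i)]; exact h i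

lemma rpow_sq_aux {p : ℝ} (hp : 0 < p) {t : ℝ} (ht : 0 ≤ t) : (t ^ p) ^ (2 / p) = t ^ 2 := by
  rw [← Real.rpow_mul ht, mul_div_cancel₀ _ hp.ne', Real.rpow_two]

lemma two_var {𝕜 : Type*} [RCLike 𝕜] {p : ℝ} (hp1 : 1 ≤ p) (hp2 : p ≤ 2) (s t : 𝕜) :
    ((‖s + t‖ ^ p) ^ (2 / p) + (‖s - t‖ ^ p) ^ (2 / p)) ^ (1 / (2 / p)) ≤
      2 ^ (p / 2) * (‖s‖ ^ p + ‖t‖ ^ p) := by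
  have hp : 0 < p := by linarith
  rw [rpow_sq_aux hp (norm_nonneg _), rpow_sq_aux hp (norm_nonneg _), one_div_div]
  have h := parallelogram_law_with_norm 𝕜 s t
  have h' : ‖s + t‖ ^ 2 + ‖s - t‖ ^ 2 = 2 * (‖s‖ ^ 2 + ‖t‖ ^ 2) := by nlinarith
  rw [h', Real.mul_rpow (by norm_num) (by positivity)]
  gcongr
  have e : ∀ u : ℝ, 0 ≤ u → (u ^ 2) ^ (p / 2) = u ^ p := by
    intro u hu
    rw [← Real.rpow_two, ← Real.rpow_mul hu]; congr 1; ring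
  rw [← e _ (norm_nonneg s), ← e _ (norm_nonneg t)]
  exact Real.rpow_add_le_add_rpow (by positivity) (by positivity) (by positivity) (by linarith)

lemma clarkson_aux {𝕜 : Type*} [RCLike 𝕜] {p : ℝ} (hp1 : 1 ≤ p) (hp2 : p ≤ 2)
    [Fact (1 ≤ ENNReal.ofReal p)] (x y : lp (fun _ : ℕ => 𝕜) (ENNReal.ofReal p))
    (hx : ‖x‖ = 1) (hy : ‖y‖ = 1) :
    ‖x + y‖ ^ 2 + ‖x - y‖ ^ 2 ≤ 4 * (2 : ℝ) ^ ((2 - p) / p) := by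
  have hp : 0 < p := by linarith
  have hpr : (ENNReal.ofReal p).toReal = p := ENNReal.toReal_ofReal hp.le
  have hs : ∀ z : lp (fun _ : ℕ => 𝕜) (ENNReal.ofReal p),
      HasSum (fun i => ‖z i‖ ^ p) (‖z‖ ^ p) := by
    intro z
    have := lp.hasSum_norm (by rw [hpr]; exact hp) z
    rwa [hpr] at this
  have hm := mink_aux (r := 2 / p) (by rw [le_div_iff₀ hp]; linarith) (hs (x + y)) (hs (x - y))
    (((hs x).add (hs y)).mul_left (2 ^ (p / 2))) (fun i => by positivity) (fun i => by positivity)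
    (fun i => by simpa using two_var hp1 hp2 (x i) (y i))
  rw [rpow_sq_aux hp (norm_nonneg _), rpow_sq_aux hp (norm_nonneg _), hx, hy, Real.one_rpow,
    one_div_div] at hm
  have h2 := Real.rpow_le_rpow (by positivity) hm (show 0 ≤ 2 / p by positivity)
  rw [← Real.rpow_mul (by positivity)] at h2
  have e1 : p / 2 * (2 / p) = 1 := by field_simp
  rw [e1, Real.rpow_one] at h2
  refine h2.trans (le_of_eq ?_)
  have e2 : (2 : ℝ) ^ (p / 2) * (1 + 1) = 2 ^ (p / 2 + 1) := by
    rw [Real.rpow_add (by norm_num), Real.rpow_one]; norm_num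
  have e3 : (4 : ℝ) = 2 ^ (2 : ℝ) := by norm_num
  rw [e2, e3, ← Real.rpow_mul (by norm_num), ← Real.rpow_add (by norm_num)]
  congr 1
  field_simp
  ring

lemma upper_aux {𝕜 : Type*} [RCLike 𝕜] (p : ℝ) (hp1 : 1 ≤ p) (hp2 : p ≤ 2)
    [Fact (1 ≤ ENNReal.ofReal p)]
    (B : ContinuousMultilinearMap 𝕜
        (fun _ : Fin 2 => lp (fun _ : ℕ => 𝕜) (ENNReal.ofReal p)) 𝕜)
    (hB : ∀ (σ : Equiv.Perm (Fin 2)) (v : Fin 2 → lp (fun _ : ℕ => 𝕜) (ENNReal.ofReal p)),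
        B (v ∘ σ) = B v) :
      ‖B‖ ≤ (2 : ℝ) ^ ((2 - p) / p)
        * sSup ((fun u => ‖B (fun _ => u)‖) ''
            closedBall (0 : lp (fun _ : ℕ => 𝕜) (ENNReal.ofReal p)) 1) := by
  set K := sSup ((fun u => ‖B (fun _ => u)‖) ''
            closedBall (0 : lp (fun _ : ℕ => 𝕜) (ENNReal.ofReal p)) 1) with hK
  have hbdd : BddAbove ((fun u => ‖B (fun _ => u)‖) ''
            closedBall (0 : lp (fun _ : ℕ => 𝕜) (ENNReal.ofReal p)) 1) := by
    refine ⟨‖B‖, ?_⟩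
    rintro _ ⟨u, hu, rfl⟩
    have hu' : ‖u‖ ≤ 1 := by simpa using hu
    have := B.le_opNorm_mul_prod_of_le (m := fun _ => u) (b := fun _ => 1) (fun _ => hu')
    simpa using this
  have hK1 : ∀ u, ‖u‖ ≤ 1 → ‖B (fun _ => u)‖ ≤ K := fun u hu =>
    le_csSup hbdd ⟨u, by simpa using hu, rfl⟩
  have hK0 : 0 ≤ K := (norm_nonneg _).trans (hK1 0 (by simp))
  have hsm : ∀ (c d : 𝕜) (x y : lp (fun _ : ℕ => 𝕜) (ENNReal.ofReal p)),
      B ![c • x, d • y] = c * d * B ![x, y] := by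
    intro c d x y
    have := B.map_smul_univ ![c, d] ![x, y]
    rw [Fin.prod_univ_two] at this
    simp only [Matrix.cons_val_zero, Matrix.cons_val_one, smul_eq_mul] at this
    rw [← this]
    congr 1
    funext i
    fin_cases i <;> rfl
  have hdiag : ∀ u : lp (fun _ : ℕ => 𝕜) (ENNReal.ofReal p), (fun _ : Fin 2 => u) = ![u, u] := by
    intro u; funext i; fin_cases i <;> rfl
  have hKu : ∀ u, ‖B ![u, u]‖ ≤ K * ‖u‖ ^ 2 := by
    intro u
    by_cases hu : u = 0
    · subst hu
      have := hsm 0 0 0 0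
      simp only [zero_smul, zero_mul] at this
      rw [this]; simp
    · have hn : (‖u‖ : ℝ) ≠ 0 := by simpa using hu
      have e : u = ((‖u‖ : ℝ) : 𝕜) • ((((‖u‖ : ℝ) : 𝕜)⁻¹) • u) := by
        rw [smul_smul, mul_inv_cancel₀ (by exact_mod_cast hn), one_smul]
      have h1 := hK1 ((((‖u‖ : ℝ) : 𝕜)⁻¹) • u) (by
        rw [norm_smul, norm_inv, RCLike.norm_ofReal, abs_norm, inv_mul_cancel₀ hn])
      rw [hdiag] at h1
      have h2 : B ![u, u] = ((‖u‖ : ℝ) : 𝕜) * ((‖u‖ : ℝ) : 𝕜) *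
          B ![(((‖u‖ : ℝ) : 𝕜)⁻¹) • u, (((‖u‖ : ℝ) : 𝕜)⁻¹) • u] := by
        rw [← hsm, ← e]
      rw [h2, norm_mul, norm_mul, RCLike.norm_ofReal, abs_norm]
      nlinarith [sq_nonneg ‖u‖]
  have hsymm : ∀ x y, B ![y, x] = B ![x, y] := by
    intro x y
    rw [← hB (Equiv.swap 0 1) ![x, y]]
    congr 1
    funext i
    fin_cases i <;> simp
  have hadd1 : ∀ x x' y, B ![x + x', y] = B ![x, y] + B ![x', y] := by
    intro x x' y
    have := B.cons_add ![y] x x'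
    exact this
  have hadd2 : ∀ x y y', B ![x, y + y'] = B ![x, y] + B ![x, y'] := by
    intro x y y'
    rw [hsymm, hadd1, hsymm, hsymm y']
  have hpol : ∀ x y, 4 * B ![x, y] = B ![x + y, x + y] - B ![x - y, x - y] := by
    intro x y
    have e1 : B ![x + y, x + y] = B ![x, x] + 2 * B ![x, y] + B ![y, y] := by
      rw [hadd1, hadd2, hadd2, hsymm x y]; ring
    have hneg : x - y = (1 : 𝕜) • x + (-1 : 𝕜) • y := by simp [sub_eq_add_neg]
    have e2 : B ![x - y, x - y] = B ![x, x] - 2 * B ![x, y] + B ![y, y] := by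
      rw [hneg, hadd1, hadd2, hadd2, hsm, hsm, hsm, hsm, hsymm x y]; ring
    rw [e1, e2]; ring
  have hunit : ∀ x y, ‖x‖ = 1 → ‖y‖ = 1 → ‖B ![x, y]‖ ≤ 2 ^ ((2 - p) / p) * K := by
    intro x y hx hy
    have h4 : ‖4 * B ![x, y]‖ = 4 * ‖B ![x, y]‖ := by rw [norm_mul]; simp
    have h5 : 4 * ‖B ![x, y]‖ ≤ K * ‖x + y‖ ^ 2 + K * ‖x - y‖ ^ 2 := by
      rw [← h4, hpol]
      exact (norm_sub_le _ _).trans (add_le_add (hKu _) (hKu _))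
    have := mul_le_mul_of_nonneg_left (clarkson_aux hp1 hp2 x y hx hy) hK0
    nlinarith
  refine B.opNorm_le_bound (by positivity) fun m => ?_
  have hm : m = ![m 0, m 1] := by funext i; fin_cases i <;> rfl
  rw [Fin.prod_univ_two]
  generalize m 0 = x at hm
  generalize m 1 = y at hm
  subst hm
  have hnorm : ∀ u : lp (fun _ : ℕ => 𝕜) (ENNReal.ofReal p),
      ∃ w, ‖w‖ = 1 ∧ u = ((‖u‖ : ℝ) : 𝕜) • w ∨ u = 0 := by
    intro u
    by_cases hu : u = 0
    · exact ⟨0, Or.inr hu⟩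
    · have hn : (‖u‖ : ℝ) ≠ 0 := by simpa using hu
      refine ⟨(((‖u‖ : ℝ) : 𝕜)⁻¹) • u, Or.inl ⟨?_, ?_⟩⟩
      · rw [norm_smul, norm_inv, RCLike.norm_ofReal, abs_norm, inv_mul_cancel₀ hn]
      · rw [smul_smul, mul_inv_cancel₀ (by exact_mod_cast hn), one_smul]
  obtain ⟨x', hx | hx⟩ := hnorm x
  · obtain ⟨y', hy | hy⟩ := hnorm y
    · have e : B ![x, y] = ((‖x‖ : ℝ) : 𝕜) * ((‖y‖ : ℝ) : 𝕜) * B ![x', y'] := by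
        rw [← hsm, ← hx.2, ← hy.2]
      rw [e, norm_mul, norm_mul, RCLike.norm_ofReal, RCLike.norm_ofReal, abs_norm, abs_norm,
        mul_comm]
      exact mul_le_mul_of_nonneg_right (hunit _ _ hx.1 hy.1) (by positivity)
    · subst hy
      have := hsm 1 0 x 0
      simp only [zero_smul, mul_zero, zero_mul, one_smul] at this
      rw [this]; simp
  · subst hx
    have := hsm 0 1 0 y
    simp only [zero_smul, mul_zero, zero_mul, one_smul] at this
    rw [this]; simp

lemma two_coord {𝕜 : Type*} [RCLike 𝕜] {p : ℝ} (hp1 : 1 ≤ p)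
    [Fact (1 ≤ ENNReal.ofReal p)] (x : lp (fun _ : ℕ => 𝕜) (ENNReal.ofReal p)) :
    ‖x 0‖ ^ p + ‖x 1‖ ^ p ≤ ‖x‖ ^ p := by
  have hp : 0 < p := by linarith
  have hpr : (ENNReal.ofReal p).toReal = p := ENNReal.toReal_ofReal hp.le
  have := lp.sum_rpow_le_norm_rpow (by rw [hpr]; exact hp) x (Finset.range 2)
  rwa [hpr, Finset.sum_range_succ, Finset.sum_range_one] at this

lemma two_coord_sq {𝕜 : Type*} [RCLike 𝕜] {p : ℝ} (hp1 : 1 ≤ p) (hp2 : p ≤ 2)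
    [Fact (1 ≤ ENNReal.ofReal p)] (x : lp (fun _ : ℕ => 𝕜) (ENNReal.ofReal p)) :
    ‖x 0‖ ^ 2 + ‖x 1‖ ^ 2 ≤ ‖x‖ ^ 2 := by
  have hp : 0 < p := by linarith
  have h := two_coord hp1 x
  have h1 : (1 : ℝ) ≤ 2 / p := by rw [le_div_iff₀ hp]; linarith
  have h2 := Real.add_rpow_le_rpow_add (p := 2 / p) (a := ‖x 0‖ ^ p) (b := ‖x 1‖ ^ p)
    (by positivity) (by positivity) h1
  have h3 := Real.rpow_le_rpow (by positivity) h (show 0 ≤ 2 / p by positivity)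
  have h4 := h2.trans h3
  simpa only [rpow_sq_aux hp (norm_nonneg _)] using h4

lemma prod_aux {𝕜 : Type*} [RCLike 𝕜] {p : ℝ} (hp1 : 1 ≤ p)
    [Fact (1 ≤ ENNReal.ofReal p)] (x : lp (fun _ : ℕ => 𝕜) (ENNReal.ofReal p)) (hx : ‖x‖ ≤ 1) :
    ‖x 0‖ * ‖x 1‖ ≤ (2 : ℝ) ^ (-(2 : ℝ) / p) := by
  have hp : 0 < p := by linarith
  have h := (two_coord hp1 x).trans (Real.rpow_le_one (norm_nonneg _) hx hp.le)
  have h1 : (‖x 0‖ * ‖x 1‖) ^ p ≤ 2 ^ (-2 : ℝ) := by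
    rw [Real.mul_rpow (norm_nonneg _) (norm_nonneg _), Real.rpow_neg (by norm_num), Real.rpow_two]
    have : 0 ≤ ‖x 0‖ ^ p := by positivity
    have : 0 ≤ ‖x 1‖ ^ p := by positivity
    nlinarith [sq_nonneg (‖x 0‖ ^ p - ‖x 1‖ ^ p)]
  have h2 := Real.rpow_le_rpow (by positivity) h1 (show 0 ≤ 1 / p by positivity)
  rw [← Real.rpow_mul (by positivity), ← Real.rpow_mul (by positivity), mul_one_div_cancel hp.ne',
    Real.rpow_one, mul_one_div] at h2
  exact h2

lemma exists_L {𝕜 : Type*} [RCLike 𝕜] (p : ℝ) (hp1 : 1 ≤ p) (hp2 : p ≤ 2)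
    [Fact (1 ≤ ENNReal.ofReal p)] :
    ∃ L : ContinuousMultilinearMap 𝕜
        (fun _ : Fin 2 => lp (fun _ : ℕ => 𝕜) (ENNReal.ofReal p)) 𝕜,
      (∀ (σ : Equiv.Perm (Fin 2)) (v : Fin 2 → lp (fun _ : ℕ => 𝕜) (ENNReal.ofReal p)),
        L (v ∘ σ) = L v) ∧
      (∀ v, L v = (v 0 0 * v 1 1 + v 0 1 * v 1 0) / 2) ∧
      ‖L‖ = 1 / 2 ∧
      sSup ((fun u => ‖L (fun _ => u)‖) ''
          closedBall (0 : lp (fun _ : ℕ => 𝕜) (ENNReal.ofReal p)) 1)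
        = (2 : ℝ) ^ (-(2 : ℝ) / p) := by
  have hp : 0 < p := by linarith
  have hpr : (ENNReal.ofReal p).toReal = p := ENNReal.toReal_ofReal hp.le
  have hpe : 0 < ENNReal.ofReal p := by simpa using hp
  let e : ℕ → (lp (fun _ : ℕ => 𝕜) (ENNReal.ofReal p) →L[𝕜] 𝕜) :=
    fun i => lp.evalCLM 𝕜 (fun _ : ℕ => 𝕜) (ENNReal.ofReal p) i
  let M : ContinuousMultilinearMap 𝕜 (fun _ : Fin 2 => 𝕜) 𝕜 :=
    ContinuousMultilinearMap.mkPiAlgebra 𝕜 (Fin 2) 𝕜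
  let L : ContinuousMultilinearMap 𝕜
        (fun _ : Fin 2 => lp (fun _ : ℕ => 𝕜) (ENNReal.ofReal p)) 𝕜 :=
    (2⁻¹ : 𝕜) • (M.compContinuousLinearMap (fun i : Fin 2 => e (if i = 0 then 0 else 1)) +
      M.compContinuousLinearMap (fun i : Fin 2 => e (if i = 0 then 1 else 0)))
  have hL : ∀ v, L v = (v 0 0 * v 1 1 + v 0 1 * v 1 0) / 2 := by
    intro v
    simp only [L, M, e, ContinuousMultilinearMap.smul_apply, ContinuousMultilinearMap.add_apply,
      ContinuousMultilinearMap.compContinuousLinearMap_apply,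
      ContinuousMultilinearMap.mkPiAlgebra_apply, Fin.prod_univ_two, smul_eq_mul]
    rw [div_eq_inv_mul]
    rfl
  have hLd : ∀ u, ‖L (fun _ => u)‖ = ‖u 0‖ * ‖u 1‖ := by
    intro u
    rw [hL, ← norm_mul]
    congr 1
    ring
  refine ⟨L, ?_, hL, ?_, ?_⟩
  · intro σ v
    rw [hL, hL]
    have : ∀ σ : Equiv.Perm (Fin 2), (σ 0 = 0 ∧ σ 1 = 1) ∨ (σ 0 = 1 ∧ σ 1 = 0) := by decide
    rcases this σ with h | h
    · simp [h.1, h.2]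
    · simp only [Function.comp, h.1, h.2]; ring
  · apply le_antisymm
    · refine L.opNorm_le_bound (by norm_num) fun m => ?_
      rw [hL, Fin.prod_univ_two]
      have hx := two_coord_sq hp1 hp2 (m 0)
      have hy := two_coord_sq hp1 hp2 (m 1)
      have h1 : ‖(m 0 0 * m 1 1 + m 0 1 * m 1 0) / 2‖ ≤
          (‖m 0 0‖ * ‖m 1 1‖ + ‖m 0 1‖ * ‖m 1 0‖) / 2 := by
        rw [norm_div, RCLike.norm_ofNat]
        gcongr
        exact (norm_add_le _ _).trans (by rw [norm_mul, norm_mul])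
      have h2 : ‖m 0 0‖ * ‖m 1 1‖ + ‖m 0 1‖ * ‖m 1 0‖ ≤ ‖m 0‖ * ‖m 1‖ := by
        refine (abs_le_of_sq_le_sq' ?_ (by positivity)).2
        have := mul_le_mul hx hy (by positivity) (by positivity)
        nlinarith [sq_nonneg (‖m 0 0‖ * ‖m 1 0‖ - ‖m 0 1‖ * ‖m 1 1‖)]
      linarith
    · have := L.le_opNorm ![lp.single (ENNReal.ofReal p) 0 (1 : 𝕜),
        lp.single (ENNReal.ofReal p) 1 (1 : 𝕜)]
      rw [hL, Fin.prod_univ_two] at this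
      simpa [lp.norm_single hpe, lp.single_apply] using this
  · apply IsGreatest.csSup_eq
    constructor
    · have hc0 : (0 : ℝ) ≤ 2 ^ (-1 / p) := by positivity
      let w : lp (fun _ : ℕ => 𝕜) (ENNReal.ofReal p) :=
        ∑ i ∈ Finset.range 2, lp.single (ENNReal.ofReal p) i (((2 : ℝ) ^ (-1 / p) : ℝ) : 𝕜)
      have hw := lp.norm_sum_single (E := fun _ : ℕ => 𝕜) (p := ENNReal.ofReal p)
        (by rw [hpr]; exact hp) (fun _ => (((2 : ℝ) ^ (-1 / p) : ℝ) : 𝕜)) (Finset.range 2)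
      have hw1 : ‖w‖ ^ p = 1 := by
        rw [hpr] at hw
        rw [show ‖w‖ ^ p = _ from hw]
        simp only [RCLike.norm_ofReal, abs_of_nonneg hc0, Finset.sum_const, Finset.card_range]
        rw [← Real.rpow_mul (by norm_num), div_mul_cancel₀ _ hp.ne', Real.rpow_neg_one]
        norm_num
      have hw2 : ‖w‖ ≤ 1 := by
        by_contra hlt
        push Not at hlt
        have := Real.one_lt_rpow hlt hp
        linarith
      refine ⟨w, by simpa using hw2, ?_⟩
      have h0 : w 0 = (((2 : ℝ) ^ (-1 / p) : ℝ) : 𝕜) := by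
        simp [w, Finset.sum_range_succ, lp.single_apply]
      have h1 : w 1 = (((2 : ℝ) ^ (-1 / p) : ℝ) : 𝕜) := by
        simp [w, Finset.sum_range_succ, lp.single_apply]
      simp only [hLd]
      rw [h0, h1, RCLike.norm_ofReal, abs_of_nonneg hc0, ← Real.rpow_add (by norm_num)]
      congr 1
      ring
    · rintro _ ⟨u, hu, rfl⟩
      simp only [hLd]
      exact prod_aux hp1 u (by simpa using hu)

/-- The second polarization constant of `ℓ_p` (real or complex) for `1 ≤ p ≤ 2`:
every continuous symmetric bilinear form `B` satisfies `‖B‖ ≤ 2^{(2-p)/p} ‖B̂‖`, and the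
form `L(x,y) = (x₁y₂ + x₂y₁)/2`, with `L̂(x) = x₁x₂`, has `‖L‖ = 1/2`,
`‖L̂‖ = 2^{-2/p}`, and `‖L‖ = 2^{(2-p)/p} ‖L̂‖`; hence the second polarization constant
of `ℓ_p` equals `2^{(2-p)/p}`. -/
theorem polarization_constant_lp_two
    {𝕜 : Type*} [RCLike 𝕜] (p : ℝ) (hp1 : 1 ≤ p) (hp2 : p ≤ 2)
    [Fact (1 ≤ ENNReal.ofReal p)] :
    (∀ B : ContinuousMultilinearMap 𝕜
        (fun _ : Fin 2 => lp (fun _ : ℕ => 𝕜) (ENNReal.ofReal p)) 𝕜,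
      (∀ (σ : Equiv.Perm (Fin 2)) (v : Fin 2 → lp (fun _ : ℕ => 𝕜) (ENNReal.ofReal p)),
        B (v ∘ σ) = B v) →
      ‖B‖ ≤ (2 : ℝ) ^ ((2 - p) / p)
        * sSup ((fun u => ‖B (fun _ => u)‖) ''
            closedBall (0 : lp (fun _ : ℕ => 𝕜) (ENNReal.ofReal p)) 1)) ∧
    (∃ L : ContinuousMultilinearMap 𝕜
        (fun _ : Fin 2 => lp (fun _ : ℕ => 𝕜) (ENNReal.ofReal p)) 𝕜,
      (∀ (σ : Equiv.Perm (Fin 2)) (v : Fin 2 → lp (fun _ : ℕ => 𝕜) (ENNReal.ofReal p)),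
        L (v ∘ σ) = L v) ∧
      (∀ v, L v = (v 0 0 * v 1 1 + v 0 1 * v 1 0) / 2) ∧
      ‖L‖ = 1 / 2 ∧
      sSup ((fun u => ‖L (fun _ => u)‖) ''
          closedBall (0 : lp (fun _ : ℕ => 𝕜) (ENNReal.ofReal p)) 1)
        = (2 : ℝ) ^ (-(2 : ℝ) / p) ∧
      ‖L‖ = (2 : ℝ) ^ ((2 - p) / p)
        * sSup ((fun u => ‖L (fun _ => u)‖) ''
            closedBall (0 : lp (fun _ : ℕ => 𝕜) (ENNReal.ofReal p)) 1)) ∧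
    sInf {M : ℝ |
        ∀ B : ContinuousMultilinearMap 𝕜
          (fun _ : Fin 2 => lp (fun _ : ℕ => 𝕜) (ENNReal.ofReal p)) 𝕜,
        (∀ (σ : Equiv.Perm (Fin 2)) (v : Fin 2 → lp (fun _ : ℕ => 𝕜) (ENNReal.ofReal p)),
          B (v ∘ σ) = B v) →
        ‖B‖ ≤ M * sSup ((fun u => ‖B (fun _ => u)‖) ''
            closedBall (0 : lp (fun _ : ℕ => 𝕜) (ENNReal.ofReal p)) 1)}
      = (2 : ℝ) ^ ((2 - p) / p) := by
  have hp : 0 < p := by linarith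
  have hmul : (1 / 2 : ℝ) = (2 : ℝ) ^ ((2 - p) / p) * (2 : ℝ) ^ (-(2 : ℝ) / p) := by
    rw [← Real.rpow_add (by norm_num), show (2 - p) / p + -2 / p = -1 by field_simp; ring,
      Real.rpow_neg_one]
    norm_num
  obtain ⟨L, hs, hf, hn, hd⟩ := exists_L (𝕜 := 𝕜) p hp1 hp2
  refine ⟨fun B hB => upper_aux p hp1 hp2 B hB, ⟨L, hs, hf, hn, hd, ?_⟩, ?_⟩
  · rw [hd, hn]; exact hmul
  · apply IsLeast.csInf_eq
    refine ⟨fun B hB => upper_aux p hp1 hp2 B hB, ?_⟩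
    intro M hM
    have := hM L hs
    rw [hn, hd, hmul] at this
    exact le_of_mul_le_mul_right this (by positivity)
end

section
/- Let 2 ≤ p < ∞. On the real sequence space ℓ_p, the symmetric bilinear form L(x,y) = x₁y₁ − x₂y₂, with associated 2-homogeneous polynomial L̂(x) = x₁² − x₂², satisfies ‖L̂‖ = 1 and ‖L‖ = 2^{(p−2)/p} = 2^{(p−2)/p}·‖L̂‖; consequently the 2nd polarization constant of real ℓ_p is at least 2^{(p−2)/p}. -/
open Metric
open scoped ENNReal

lemma aux_key (p a b N : ℝ) (hp2 : 2 ≤ p) (ha : 0 ≤ a) (hb : 0 ≤ b) (hN : 0 ≤ N)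
    (h : a ^ p + b ^ p ≤ N ^ p) : a ^ 2 + b ^ 2 ≤ (2 : ℝ) ^ ((p - 2) / p) * N ^ 2 := by
  have hp : 0 < p := by linarith
  have e : ∀ x : ℝ, 0 ≤ x → (x ^ 2) ^ (p / 2) = x ^ p := by
    intro x hx
    rw [← Real.rpow_natCast, ← Real.rpow_mul hx]
    congr 1; push_cast; ring
  have h1 := NNReal.rpow_add_le_mul_rpow_add_rpow (⟨a ^ 2, by positivity⟩) (⟨b ^ 2, by positivity⟩)
    (p := p / 2) (by linarith)
  have h2 : (a ^ 2 + b ^ 2) ^ (p / 2) ≤ (2 : ℝ) ^ (p / 2 - 1) * ((a ^ 2) ^ (p / 2) + (b ^ 2) ^ (p / 2)) := by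
    exact_mod_cast h1
  rw [e a ha, e b hb] at h2
  rw [← Real.rpow_le_rpow_iff (z := p / 2) (by positivity) (by positivity) (by positivity),
    Real.mul_rpow (by positivity) (by positivity), e N hN, ← Real.rpow_mul (by norm_num)]
  have : (p - 2) / p * (p / 2) = p / 2 - 1 := by field_simp
  rw [this]
  exact h2.trans (mul_le_mul_of_nonneg_left h (by positivity))

lemma aux_lp (p : ℝ) (hp2 : 2 ≤ p) [Fact (1 ≤ ENNReal.ofReal p)]
    (x : lp (fun _ : ℕ => ℝ) (ENNReal.ofReal p)) :
    (x 0) ^ 2 + (x 1) ^ 2 ≤ (2 : ℝ) ^ ((p - 2) / p) * ‖x‖ ^ 2 := by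
  have ht : (ENNReal.ofReal p).toReal = p := ENNReal.toReal_ofReal (by linarith)
  have h := lp.sum_rpow_le_norm_rpow (p := ENNReal.ofReal p) (by rw [ht]; linarith) x {0, 1}
  rw [ht, Finset.sum_pair (by norm_num)] at h
  have := aux_key p _ _ _ hp2 (norm_nonneg _) (norm_nonneg _) (norm_nonneg _) h
  simpa using this

lemma aux_vec_s17 (p : ℝ) (hp2 : 2 ≤ p) [Fact (1 ≤ ENNReal.ofReal p)] (a b : ℝ)
    (h : |a| ^ p + |b| ^ p = 1) :
    ∃ x : lp (fun _ : ℕ => ℝ) (ENNReal.ofReal p), ‖x‖ = 1 ∧ x 0 = a ∧ x 1 = b := by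
  have ht : (ENNReal.ofReal p).toReal = p := ENNReal.toReal_ofReal (by linarith)
  have hn := lp.norm_sum_single (E := fun _ : ℕ => ℝ) (p := ENNReal.ofReal p)
    (by rw [ht]; linarith) (fun i => if i = 0 then a else b) {0, 1}
  rw [ht, Finset.sum_pair (by norm_num), Finset.sum_pair (by norm_num)] at hn
  simp only [if_true, one_ne_zero, if_false, Real.norm_eq_abs, h] at hn
  refine ⟨lp.single _ 0 a + lp.single _ 1 b,
    (Real.rpow_left_inj (z := p) (norm_nonneg _) zero_le_one (by linarith)).1 (by rw [Real.one_rpow]; exact hn), ?_, ?_⟩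
  · simp [lp.single_apply]
  · simp [lp.single_apply]

/-- On the real space `ℓ_p`, `2 ≤ p < ∞`, the symmetric bilinear form
`L(x,y) = x₁y₁ - x₂y₂`, with `L̂(x) = x₁² - x₂²`, satisfies `‖L̂‖ = 1` and
`‖L‖ = 2^{(p-2)/p} = 2^{(p-2)/p} ‖L̂‖`; consequently the second polarization constant
of real `ℓ_p` is at least `2^{(p-2)/p}`. -/
theorem polarization_lower_bound_real_lp
    (p : ℝ) (hp2 : 2 ≤ p) [Fact (1 ≤ ENNReal.ofReal p)] :
    (∃ L : ContinuousMultilinearMap ℝ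
        (fun _ : Fin 2 => lp (fun _ : ℕ => ℝ) (ENNReal.ofReal p)) ℝ,
      (∀ (σ : Equiv.Perm (Fin 2)) (v : Fin 2 → lp (fun _ : ℕ => ℝ) (ENNReal.ofReal p)),
        L (v ∘ σ) = L v) ∧
      (∀ v, L v = v 0 0 * v 1 0 - v 0 1 * v 1 1) ∧
      sSup ((fun u => ‖L (fun _ => u)‖) ''
          closedBall (0 : lp (fun _ : ℕ => ℝ) (ENNReal.ofReal p)) 1) = 1 ∧
      ‖L‖ = (2 : ℝ) ^ ((p - 2) / p) ∧
      ‖L‖ = (2 : ℝ) ^ ((p - 2) / p)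
        * sSup ((fun u => ‖L (fun _ => u)‖) ''
            closedBall (0 : lp (fun _ : ℕ => ℝ) (ENNReal.ofReal p)) 1)) ∧
    ∀ M : ℝ,
      (∀ B : ContinuousMultilinearMap ℝ
          (fun _ : Fin 2 => lp (fun _ : ℕ => ℝ) (ENNReal.ofReal p)) ℝ,
        (∀ (σ : Equiv.Perm (Fin 2)) (v : Fin 2 → lp (fun _ : ℕ => ℝ) (ENNReal.ofReal p)),
          B (v ∘ σ) = B v) →
        ‖B‖ ≤ M * sSup ((fun u => ‖B (fun _ => u)‖) ''
            closedBall (0 : lp (fun _ : ℕ => ℝ) (ENNReal.ofReal p)) 1)) →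
      (2 : ℝ) ^ ((p - 2) / p) ≤ M := by
  have hp : 0 < p := by linarith
  have hE0 : ENNReal.ofReal p ≠ 0 := by simpa using hp
  set C : ℝ := (2 : ℝ) ^ ((p - 2) / p) with hC
  have hC0 : 0 ≤ C := by positivity
  obtain ⟨L, hLv⟩ : ∃ L : ContinuousMultilinearMap ℝ
        (fun _ : Fin 2 => lp (fun _ : ℕ => ℝ) (ENNReal.ofReal p)) ℝ,
      ∀ v, L v = v 0 0 * v 1 0 - v 0 1 * v 1 1 := by
    refine ⟨(ContinuousMultilinearMap.mkPiAlgebra ℝ (Fin 2) ℝ).compContinuousLinearMap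
        (fun _ => lp.evalCLM ℝ (fun _ : ℕ => ℝ) (ENNReal.ofReal p) 0) -
      (ContinuousMultilinearMap.mkPiAlgebra ℝ (Fin 2) ℝ).compContinuousLinearMap
        (fun _ => lp.evalCLM ℝ (fun _ : ℕ => ℝ) (ENNReal.ofReal p) 1), fun v => ?_⟩
    simp [Fin.prod_univ_two]
    rfl
  have hsym : ∀ (σ : Equiv.Perm (Fin 2)) (v : Fin 2 → lp (fun _ : ℕ => ℝ) (ENNReal.ofReal p)),
        L (v ∘ σ) = L v := by
    intro σ v
    rw [hLv, hLv]
    have h1 := Fintype.prod_equiv σ (fun i => (v (σ i)) 0) (fun i => (v i) 0) (fun _ => rfl)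
    have h2 := Fintype.prod_equiv σ (fun i => (v (σ i)) 1) (fun i => (v i) 1) (fun _ => rfl)
    rw [Fin.prod_univ_two, Fin.prod_univ_two] at h1 h2
    simp only [Function.comp]
    rw [h1, h2]
  have hsup : sSup ((fun u => ‖L (fun _ => u)‖) ''
          closedBall (0 : lp (fun _ : ℕ => ℝ) (ENNReal.ofReal p)) 1) = 1 := by
    apply IsLUB.csSup_eq _ ((nonempty_closedBall.2 zero_le_one).image _)
    apply IsGreatest.isLUB
    constructor
    · obtain ⟨x, hx, h0, h1⟩ := aux_vec_s17 p hp2 1 0 (by simp [hp.ne'])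
      exact ⟨x, by simp [hx], by simp [hLv, h0, h1]⟩
    · rintro _ ⟨x, hx, rfl⟩
      have hx1 : ‖x‖ ≤ 1 := by simpa using hx
      have a0 := (lp.norm_apply_le_norm hE0 x 0).trans hx1
      have a1 := (lp.norm_apply_le_norm hE0 x 1).trans hx1
      rw [Real.norm_eq_abs, abs_le_one_iff_mul_self_le_one] at a0 a1
      simp only [hLv, Real.norm_eq_abs]
      rw [abs_le]
      constructor <;> nlinarith [mul_self_nonneg (x 0), mul_self_nonneg (x 1)]
  have hnorm : ‖L‖ = C := by
    apply le_antisymm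
    · refine ContinuousMultilinearMap.opNorm_le_bound hC0 fun v => ?_
      rw [hLv, Fin.prod_univ_two, Real.norm_eq_abs]
      have hx := aux_lp p hp2 (v 0)
      have hy := aux_lp p hp2 (v 1)
      rw [← hC] at hx hy
      apply abs_le_of_sq_le_sq _ (by positivity)
      have hm := mul_le_mul hx hy (by positivity) (by positivity)
      nlinarith [sq_nonneg ((v 0) 0 * (v 1) 1 + (v 0) 1 * (v 1) 0)]
    · set t : ℝ := (2 : ℝ) ^ (-1 / p) with ht
      have ht0 : 0 < t := by positivity
      have htp : t ^ p = 1 / 2 := by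
        rw [ht, ← Real.rpow_mul (by norm_num), div_mul_cancel₀ _ hp.ne', Real.rpow_neg_one]
        norm_num
      obtain ⟨x, hx, x0, x1⟩ := aux_vec_s17 p hp2 t t (by rw [abs_of_pos ht0, htp]; norm_num)
      obtain ⟨y, hy, y0, y1⟩ := aux_vec_s17 p hp2 t (-t)
        (by rw [abs_neg, abs_of_pos ht0, htp]; norm_num)
      have h := L.le_opNorm ![x, y]
      rw [hLv, Fin.prod_univ_two] at h
      simp only [Matrix.cons_val_zero, Matrix.cons_val_one, hx, hy, x0, x1, y0, y1] at h
      have hCt : C = 2 * t * t := by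
        rw [hC, ht, mul_assoc, ← Real.rpow_add (by norm_num)]
        have e : (p - 2) / p = 1 + (-1 / p + -1 / p) := by
          field_simp
          ring
        rw [e, Real.rpow_add (by norm_num) 1, Real.rpow_one]
      have := (le_abs_self _).trans h
      linarith
  refine ⟨⟨L, hsym, hLv, hsup, hnorm, by rw [hsup, hnorm, mul_one]⟩, fun M hM => ?_⟩
  have := hM L hsym
  rwa [hsup, hnorm, mul_one] at this
end

section
/- Let H be a real or complex Hilbert space, n ≥ 2, and let L be a continuous symmetric n-linear form on H that attains its norm, i.e., there exist unit vectors x₁,…,x_n ∈ H with |L(x₁,…,x_n)| = ‖L‖. Then the associated continuous n-homogeneous polynomial L̂(x) = L(x,…,x) also attains its norm on the closed unit ball, and ‖L‖ = ‖L̂‖. -/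
open Metric

section helpers

variable {𝕜 : Type*} [RCLike 𝕜] {H : Type*} [NormedAddCommGroup H]
    [InnerProductSpace 𝕜 H]

theorem aux_riesz [CompleteSpace H] (f : H →L[𝕜] 𝕜) (M : ℝ) (hf : ‖f‖ ≤ M) (y : H) (hy : ‖y‖ = 1)
    (hM : ‖f y‖ = M) (z : H) : f z = f y * inner 𝕜 y z := by
  obtain ⟨a, rfl⟩ := (InnerProductSpace.toDual 𝕜 H).surjective f
  simp only [InnerProductSpace.toDual_apply_apply, LinearIsometryEquiv.norm_map] at *
  have h0 : a - (inner 𝕜 y a : 𝕜) • y = 0 := by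
    rw [← norm_eq_zero, ← sq_eq_zero_iff]
    have h1 : ‖a - (inner 𝕜 y a : 𝕜) • y‖ ^ 2 = ‖a‖ ^ 2 - M ^ 2 := by
      rw [norm_sub_sq (𝕜 := 𝕜), inner_smul_right, norm_smul, hy, ← inner_conj_symm y a,
        RCLike.conj_mul, RCLike.norm_conj, hM]
      norm_cast
      ring
    have h2 : ‖a‖ ^ 2 ≤ M ^ 2 := by gcongr
    nlinarith [sq_nonneg ‖a - (inner 𝕜 y a : 𝕜) • y‖]
  have h1 : a = (inner 𝕜 y a : 𝕜) • y := sub_eq_zero.mp h0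
  conv_lhs => rw [h1]
  rw [inner_smul_left, inner_conj_symm]

theorem aux_update [CompleteSpace H] {n : ℕ} (L : ContinuousMultilinearMap 𝕜 (fun _ : Fin n => H) 𝕜)
    (v : Fin n → H) (hv : ∀ i, ‖v i‖ = 1) (hL : ‖L v‖ = ‖L‖) (j : Fin n) (z : H) :
    L (Function.update v j z) = L v * inner 𝕜 (v j) z := by
  have key := aux_riesz (L.toContinuousLinearMap v j) ‖L‖ ?_ (v j) (hv j) ?_ z
  · simpa using key
  · refine ContinuousLinearMap.opNorm_le_bound _ (norm_nonneg _) fun z => ?_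
    refine (L.le_opNorm _).trans (le_of_eq ?_)
    congr 1
    rw [Finset.prod_eq_single j]
    · simp
    · intro b _ hb
      simp [Function.update_of_ne hb, hv]
    · simp
  · simpa using hL

theorem aux_sum {n : ℕ} (v : Fin n → H) (i : Fin n) (a : H) :
    ∑ k, Function.update v i a k = ∑ k, v k + (a - v i) := by
  rw [Finset.sum_update_of_mem (Finset.mem_univ i)]
  have h := Finset.sum_update_of_mem (Finset.mem_univ i) v (v i)
  rw [Function.update_eq_self] at h
  rw [h]
  abel

theorem aux_pair [CompleteSpace H] {n : ℕ} (L : ContinuousMultilinearMap 𝕜 (fun _ : Fin n => H) 𝕜)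
    (hsym : ∀ (σ : Equiv.Perm (Fin n)) (v : Fin n → H), L (v ∘ σ) = L v)
    (v : Fin n → H) (hv : ∀ i, ‖v i‖ = 1) (hL : ‖L v‖ = ‖L‖) (i j : Fin n) (hij : i ≠ j) :
    L (Function.update (Function.update v i (v i + v j)) j (v i + v j))
      = L v * (‖v i + v j‖ : 𝕜) ^ 2 := by
  set p := v i + v j with hp
  have h1 : L (Function.update (Function.update v i (v i)) j p) = L v * inner 𝕜 (v j) p := by
    rw [Function.update_eq_self]; exact aux_update L v hv hL j p
  have h2 : L (Function.update (Function.update v i (v j)) j p) = L v * inner 𝕜 (v i) p := by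
    rw [← aux_update L v hv hL i p, ← hsym (Equiv.swap i j)]
    congr 1
    ext k
    by_cases hki : k = i
    · subst hki; simp
    · by_cases hkj : k = j
      · subst hkj; simp [hij, hki]
      · simp [Equiv.swap_apply_of_ne_of_ne hki hkj, hki, hkj]
  have h3 : Function.update (Function.update v i p) j p
      = Function.update (Function.update v j p) i (v i + v j) := by
    rw [Function.update_comm hij]
  rw [h3, L.map_update_add, Function.update_comm hij.symm, h1, Function.update_comm hij.symm, h2,
    ← inner_self_eq_norm_sq_to_K (𝕜 := 𝕜), ← mul_add, ← inner_add_left, add_comm (v j)]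

theorem aux_max [CompleteSpace H] {n : ℕ} (L : ContinuousMultilinearMap 𝕜 (fun _ : Fin n => H) 𝕜)
    (hsym : ∀ (σ : Equiv.Perm (Fin n)) (v : Fin n → H), L (v ∘ σ) = L v)
    (V : Submodule 𝕜 H)
    (v : Fin n → H) (hV : ∀ i, v i ∈ V) (hv : ∀ i, ‖v i‖ = 1) (hL : ‖L v‖ = ‖L‖)
    (hmax : ∀ u : Fin n → H, (∀ i, u i ∈ V) → (∀ i, ‖u i‖ = 1) → ‖L u‖ = ‖L‖ →
      ‖∑ k, u k‖ ≤ ‖∑ k, v k‖) (i j : Fin n) : v i = v j := by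
  by_cases hij : i = j
  · rw [hij]
  set S := ∑ k, v k with hS
  have hre : ∀ i, 1 ≤ RCLike.re (inner 𝕜 S (v i)) := by
    intro i
    have h := hmax (Function.update v i (-v i)) ?_ ?_ ?_
    · rw [aux_sum, ← hS] at h
      have h2 : ‖S + (-v i - v i)‖ ^ 2 ≤ ‖S‖ ^ 2 := by gcongr
      have h3 : -v i - v i = (-2 : 𝕜) • v i := by module
      rw [h3, norm_add_sq (𝕜 := 𝕜), inner_smul_right, norm_smul, hv] at h2
      have h4 : RCLike.re ((-2 : 𝕜) * inner 𝕜 S (v i)) = -2 * RCLike.re (inner 𝕜 S (v i)) := by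
        have := RCLike.re_ofReal_mul (K := 𝕜) (-2) (inner 𝕜 S (v i))
        rw [← this]; push_cast; rfl
      rw [h4] at h2
      simp at h2
      linarith
    · intro k
      by_cases hk : k = i
      · subst hk; simpa using hV k
      · simpa [hk] using hV k
    · intro k
      by_cases hk : k = i
      · subst hk; simpa using hv k
      · simpa [hk] using hv k
    · rw [aux_update L v hv hL, inner_neg_right, inner_self_eq_norm_sq_to_K, hv]
      simpa using hL
  set p := v i + v j with hp
  have hrp : 2 ≤ RCLike.re (inner 𝕜 S p) := by
    rw [hp, inner_add_right, map_add]; linarith [hre i, hre j]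
  have hp0 : 0 < ‖p‖ := by
    rw [norm_pos_iff]
    intro h; rw [h] at hrp; simp at hrp; linarith
  have hp2 : 2 ≤ ‖p‖ := by
    by_contra hlt
    push Not at hlt
    set r : ℝ := ‖p‖⁻¹ with hr
    have hrpos : 0 < r := by positivity
    have hrm : r * ‖p‖ = 1 := inv_mul_cancel₀ hp0.ne'
    set w : H := (r : 𝕜) • p with hw
    have hwn : ‖w‖ = 1 := by
      rw [hw, norm_smul, RCLike.norm_ofReal, abs_of_pos hrpos, hrm]
    have hwV : w ∈ V := V.smul_mem _ (V.add_mem (hV i) (hV j))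
    have h := hmax (Function.update (Function.update v i w) j w) ?_ ?_ ?_
    · rw [aux_sum, aux_sum, ← hS, Function.update_of_ne (Ne.symm hij)] at h
      have h3 : S + (w - v i) + (w - v j) = S + ((2 * r - 1 : ℝ) : 𝕜) • p := by
        rw [hw, hp]; push_cast; module
      rw [h3] at h
      have h2 : ‖S + ((2 * r - 1 : ℝ) : 𝕜) • p‖ ^ 2 ≤ ‖S‖ ^ 2 := by gcongr
      rw [norm_add_sq (𝕜 := 𝕜), inner_smul_right, RCLike.re_ofReal_mul] at h2
      have h5 : 0 < 2 * r - 1 := by nlinarith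
      have h6 := mul_le_mul_of_nonneg_left hrp h5.le
      have h7 := sq_nonneg ‖((2 * r - 1 : ℝ) : 𝕜) • p‖
      linarith
    · intro k
      by_cases hk : k = j
      · subst hk; simpa using hwV
      · by_cases hk' : k = i
        · subst hk'; simpa [hk] using hwV
        · simpa [hk, hk'] using hV k
    · intro k
      by_cases hk : k = j
      · subst hk; simpa using hwn
      · by_cases hk' : k = i
        · subst hk'; simpa [hk] using hwn
        · simpa [hk, hk'] using hv k
    · rw [hw, L.map_update_smul, Function.update_comm hij, L.map_update_smul,
        Function.update_comm (Ne.symm hij), aux_pair L hsym v hv hL i j hij, ← hp]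
      simp only [norm_smul, norm_mul, norm_pow, RCLike.norm_ofReal, abs_of_pos hrpos, abs_norm, hL]
      calc r * (r * (‖L‖ * ‖p‖ ^ 2)) = ‖L‖ * (r * ‖p‖) ^ 2 := by ring
        _ = ‖L‖ := by rw [hrm]; ring
  have hpar := parallelogram_law_with_norm 𝕜 (v i) (v j)
  rw [← hp, hv, hv] at hpar
  have : ‖v i - v j‖ = 0 := by
    have := norm_nonneg (v i - v j)
    nlinarith
  exact sub_eq_zero.mp (norm_eq_zero.mp this)

theorem aux_exists [CompleteSpace H] {n : ℕ} (L : ContinuousMultilinearMap 𝕜 (fun _ : Fin n => H) 𝕜)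
    (x : Fin n → H) (hx : ∀ i, ‖x i‖ = 1) (hL : ‖L x‖ = ‖L‖) :
    ∃ (V : Submodule 𝕜 H) (v : Fin n → H), (∀ i, v i ∈ V) ∧ (∀ i, ‖v i‖ = 1) ∧ ‖L v‖ = ‖L‖ ∧
      ∀ u : Fin n → H, (∀ i, u i ∈ V) → (∀ i, ‖u i‖ = 1) → ‖L u‖ = ‖L‖ →
      ‖∑ k, u k‖ ≤ ‖∑ k, v k‖ := by
  let V : Submodule 𝕜 H := Submodule.span 𝕜 (Set.range x)
  haveI : FiniteDimensional 𝕜 V := FiniteDimensional.span_of_finite 𝕜 (Set.finite_range x)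
  haveI : ProperSpace V := FiniteDimensional.proper_rclike 𝕜 V
  let K : Set (Fin n → H) := (Set.univ.pi fun _ => ((↑) : V → H) '' sphere (0 : V) 1) ∩
    {u | ‖L u‖ = ‖L‖}
  have hmem : ∀ u : Fin n → H, u ∈ K ↔ (∀ i, u i ∈ V) ∧ (∀ i, ‖u i‖ = 1) ∧ ‖L u‖ = ‖L‖ := by
    intro u
    simp only [K, Set.mem_inter_iff, Set.mem_pi, Set.mem_univ, true_imp_iff, Set.mem_setOf_eq,
      ← and_assoc, ← forall_and]
    refine and_congr_left fun _ => forall_congr' fun i => ?_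
    constructor
    · rintro ⟨a, ha, h⟩
      rw [← h]
      exact ⟨a.2, by simpa using ha⟩
    · rintro ⟨h1, h2⟩
      exact ⟨⟨u i, h1⟩, by simpa using h2, rfl⟩
  have hK : IsCompact K := by
    refine IsCompact.inter_right (isCompact_univ_pi fun _ =>
      (isCompact_sphere _ _).image continuous_subtype_val) ?_
    exact isClosed_eq L.cont.norm continuous_const
  have hne : K.Nonempty :=
    ⟨x, (hmem x).2 ⟨fun i => Submodule.subset_span (Set.mem_range_self i), hx, hL⟩⟩
  obtain ⟨v, hvK, hvm⟩ := hK.exists_isMaxOn hne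
    (f := fun u : Fin n → H => ‖∑ k, u k‖) (by fun_prop)
  obtain ⟨h1, h2, h3⟩ := (hmem v).1 hvK
  exact ⟨V, v, h1, h2, h3, fun u a b c => hvm ((hmem u).2 ⟨a, b, c⟩)⟩

end helpers

/-- If a continuous symmetric `n`-linear form (`n ≥ 2`) on a real or complex Hilbert
space attains its norm at unit vectors, then the associated `n`-homogeneous polynomial
`L̂` also attains its norm on the closed unit ball, and `‖L‖ = ‖L̂‖`. -/
theorem norm_attaining_symmetric_multilinear_hilbert
    {𝕜 : Type*} [RCLike 𝕜] {H : Type*} [NormedAddCommGroup H]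
    [InnerProductSpace 𝕜 H] [CompleteSpace H]
    (n : ℕ) (hn : 2 ≤ n)
    (L : ContinuousMultilinearMap 𝕜 (fun _ : Fin n => H) 𝕜)
    (hsym : ∀ (σ : Equiv.Perm (Fin n)) (v : Fin n → H), L (v ∘ σ) = L v)
    (hattain : ∃ x : Fin n → H, (∀ i, ‖x i‖ = 1) ∧ ‖L x‖ = ‖L‖) :
    (∃ x₀ : H, ‖x₀‖ ≤ 1 ∧
        ‖L (fun _ => x₀)‖
          = sSup ((fun u => ‖L (fun _ => u)‖) '' closedBall (0 : H) 1)) ∧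
      ‖L‖ = sSup ((fun u => ‖L (fun _ => u)‖) '' closedBall (0 : H) 1) := by
  obtain ⟨x, hx, hL⟩ := hattain
  obtain ⟨V, v, hV, hv, hLv, hmax⟩ := aux_exists L x hx hL
  have heq := aux_max L hsym V v hV hv hLv hmax
  let i0 : Fin n := ⟨0, by omega⟩
  have hc : v = fun _ => v i0 := funext fun i => heq i i0
  have hval : ‖L (fun _ => v i0)‖ = ‖L‖ := by rw [← hc]; exact hLv
  have hg : IsGreatest ((fun u => ‖L (fun _ => u)‖) '' closedBall (0 : H) 1) ‖L‖ := by
    refine ⟨⟨v i0, by simp [hv], hval⟩, ?_⟩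
    rintro _ ⟨u, hu, rfl⟩
    have hu1 : ‖u‖ ≤ 1 := by simpa using hu
    refine (L.le_opNorm _).trans ?_
    simp only [Finset.prod_const]
    exact mul_le_of_le_one_right (norm_nonneg _) (pow_le_one₀ (norm_nonneg _) hu1)
  exact ⟨⟨v i0, (hv i0).le, hval.trans hg.csSup_eq.symm⟩, hg.csSup_eq.symm⟩
end

section
/- Let H be a real or complex Hilbert space and let P be a continuous polynomial of degree n on H. Then for every unit vector x ∈ H, n²|P(x)|² − |DP(x)x|² + ‖DP(x)‖² ≤ n²‖P‖². In particular, if P = L̂ is a continuous n-homogeneous polynomial (so DP(x)x = nP(x)), then ‖DL̂(x)‖ ≤ n‖L̂‖ for every ‖x‖ ≤ 1; equivalently, ‖L‖ = ‖L̂‖ for every continuous symmetric n-linear form L on H. -/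
open Metric

lemma szego_orth (N : ℕ) (hN : 0 < N) (ω ζ : ℂ) (hω : ‖ω‖ = 1) (hζ : IsPrimitiveRoot ζ N)
    (b e : ℕ) (hb : b < N) (he : e < N) :
    ∑ j ∈ Finset.range N, (starRingEnd ℂ (ω * ζ ^ j)) ^ b * (ω * ζ ^ j) ^ e
      = if b = e then (N : ℂ) else 0 := by
  have hζ1 : ‖ζ‖ = 1 := hζ.norm'_eq_one hN.ne'
  have hω0 : ω ≠ 0 := by rintro rfl; simp at hω
  have hζ0 : ζ ≠ 0 := by rintro rfl; simp at hζ1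
  have hc : ∀ j, starRingEnd ℂ (ω * ζ ^ j) = (ω * ζ ^ j)⁻¹ := by
    intro j
    rw [Complex.inv_eq_conj]
    simp [hω, hζ1]
  have h1 : ∀ j, (starRingEnd ℂ (ω * ζ ^ j)) ^ b * (ω * ζ ^ j) ^ e
      = (ω ^ e / ω ^ b) * (ζ ^ e / ζ ^ b) ^ j := by
    intro j
    rw [hc, inv_pow, mul_pow, mul_pow, div_pow]
    field_simp
    ring
  simp_rw [h1]
  rw [← Finset.mul_sum]
  split_ifs with h
  · subst h
    have : ω ^ b ≠ 0 := pow_ne_zero _ hω0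
    have : ζ ^ b ≠ 0 := pow_ne_zero _ hζ0
    simp [*]
  · have hr : ζ ^ e / ζ ^ b ≠ 1 := by
      intro hh
      rw [div_eq_one_iff_eq (pow_ne_zero _ hζ0)] at hh
      exact h (hζ.pow_inj he hb hh).symm
    rw [geom_sum_eq hr, div_pow, ← pow_mul, ← pow_mul, mul_comm e, mul_comm b, pow_mul, pow_mul,
      hζ.pow_eq_one]
    simp

lemma szego_poly (N : ℕ) (Q : Polynomial ℂ) (hQ : Q.natDegree ≤ N) (M : ℝ)
    (hM : ∀ z : ℂ, ‖z‖ = 1 → ‖Q.eval z‖ ≤ M) (w : ℂ) (hw : ‖w‖ = 1) :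
    ‖(N : ℂ) * Q.eval 1 + (w - 1) * Q.derivative.eval 1‖ ≤ N * M := by
  rcases Nat.eq_zero_or_pos N with rfl | hN
  · rw [Polynomial.eq_C_of_natDegree_le_zero hQ]; simp
  obtain ⟨ω, hω⟩ := IsAlgClosed.exists_pow_nat_eq w hN
  have hω1 : ‖ω‖ = 1 := by
    have : ‖ω‖ ^ N = 1 := by rw [← norm_pow, hω, hw]
    exact (pow_eq_one_iff_of_nonneg (norm_nonneg _) hN.ne').1 this
  obtain ⟨ζ, hζ⟩ : ∃ ζ : ℂ, IsPrimitiveRoot ζ N := ⟨_, Complex.isPrimitiveRoot_exp N hN.ne'⟩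
  have hζ1 : ‖ζ‖ = 1 := hζ.norm'_eq_one hN.ne'
  set z : ℕ → ℂ := fun j => ω * ζ ^ j with hz
  have hz1 : ∀ j, ‖z j‖ = 1 := by intro j; simp [hz, hω1, hζ1]
  have hzN : ∀ j, z j ^ N = w := by
    intro j
    simp only [hz]
    rw [mul_pow, ← pow_mul, mul_comm j, pow_mul, hζ.pow_eq_one, hω]; simp
  set D : ℕ → ℂ := fun j => ∑ a ∈ Finset.range N, z j ^ a with hD
  have hA0 : ∀ e < N, ∑ j ∈ Finset.range N, starRingEnd ℂ (D j) * z j ^ e = N := by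
    intro e he
    simp only [hD, map_sum, map_pow, Finset.sum_mul]
    rw [Finset.sum_comm]
    rw [Finset.sum_congr rfl (fun b hb =>
      szego_orth N hN ω ζ hω1 hζ b e (Finset.mem_range.1 hb) he)]
    simp [he]
  have hA : ∀ e < 2 * N, ∑ j ∈ Finset.range N, starRingEnd ℂ (D j) * z j ^ e
      = N * (if e < N then 1 else w) := by
    intro e he
    split_ifs with h
    · simpa using hA0 e h
    · rw [← hA0 (e - N) (by omega), Finset.sum_mul]
      refine Finset.sum_congr rfl fun j _ => ?_
      rw [← hzN j, mul_assoc, ← pow_add]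
      congr 2; omega
  have hS : ∀ m ≤ N, ∑ j ∈ Finset.range N, starRingEnd ℂ (D j) * D j * z j ^ m
      = N * (N + (w - 1) * m) := by
    intro m hm
    have h1 : ∀ j, starRingEnd ℂ (D j) * D j * z j ^ m
        = ∑ a ∈ Finset.range N, starRingEnd ℂ (D j) * z j ^ (a + m) := by
      intro j
      conv_lhs => rw [mul_assoc]; arg 2; rw [hD, Finset.sum_mul]
      rw [Finset.mul_sum]
      simp_rw [pow_add]
    simp_rw [h1]
    rw [Finset.sum_comm, Finset.sum_congr rfl (fun a ha => hA (a + m) (by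
      have := Finset.mem_range.1 ha; omega)), ← Finset.mul_sum]
    congr 1
    have h2 : ∀ a, (if a + m < N then (1 : ℂ) else w) = w + (1 - w) * (if a + m < N then 1 else 0) := by
      intro a; split_ifs <;> ring
    simp_rw [h2]
    rw [Finset.sum_add_distrib, ← Finset.mul_sum, Finset.sum_boole]
    have h3 : (Finset.range N).filter (fun a => a + m < N) = Finset.range (N - m) := by
      ext a; simp; omega
    rw [h3]
    simp [Nat.cast_sub hm]
    ring
  have hDD : ∀ j, starRingEnd ℂ (D j) * D j = ((‖D j‖ ^ 2 : ℝ) : ℂ) := by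
    intro j; rw [Complex.conj_mul']; simp
  have hsum : ∑ j ∈ Finset.range N, ‖D j‖ ^ 2 = (N : ℝ) * N := by
    have := hS 0 (by omega)
    simp only [hDD, pow_zero, mul_one] at this
    rw [← Complex.ofReal_sum] at this
    have h : ((∑ j ∈ Finset.range N, ‖D j‖ ^ 2 : ℝ) : ℂ) = ((N * N : ℝ) : ℂ) := by
      rw [this]; simp
    exact_mod_cast h
  have hmain : ∑ j ∈ Finset.range N, starRingEnd ℂ (D j) * D j * Q.eval (z j)
      = N * ((N : ℂ) * Q.eval 1 + (w - 1) * Q.derivative.eval 1) := by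
    have hder : Q.derivative.eval 1 = ∑ m ∈ Finset.range (N + 1), Q.coeff m * m := by
      rw [Polynomial.derivative_eval, Polynomial.sum_over_range' _ _ (N + 1) (by omega)]
      · simp
      · simp
    simp_rw [Polynomial.eval_eq_sum_range' (show Q.natDegree < N + 1 by omega)]
    rw [hder]
    simp_rw [Finset.mul_sum]
    rw [Finset.sum_comm, ← Finset.sum_add_distrib, Finset.mul_sum]
    refine Finset.sum_congr rfl fun m hm => ?_
    have := hS m (by have := Finset.mem_range.1 hm; omega)
    calc _ = Q.coeff m * ∑ j ∈ Finset.range N, starRingEnd ℂ (D j) * D j * z j ^ m := by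
          rw [Finset.mul_sum]; exact Finset.sum_congr rfl fun j _ => by ring
      _ = _ := by rw [this]; simp; ring
  have hN' : (0 : ℝ) < N := by exact_mod_cast hN
  refine le_of_mul_le_mul_left ?_ hN'
  calc (N : ℝ) * ‖(N : ℂ) * Q.eval 1 + (w - 1) * Q.derivative.eval 1‖
      = ‖∑ j ∈ Finset.range N, starRingEnd ℂ (D j) * D j * Q.eval (z j)‖ := by
        rw [hmain, norm_mul]; simp
    _ ≤ ∑ j ∈ Finset.range N, ‖D j‖ ^ 2 * M := by
        refine (norm_sum_le _ _).trans (Finset.sum_le_sum fun j _ => ?_)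
        rw [hDD, norm_mul]
        have : ‖((‖D j‖ ^ 2 : ℝ) : ℂ)‖ = ‖D j‖ ^ 2 := by
          rw [Complex.norm_real, Real.norm_of_nonneg (by positivity)]
        rw [this]
        exact mul_le_mul_of_nonneg_left (hM _ (hz1 j)) (by positivity)
    _ = N * (N * M) := by rw [← Finset.sum_mul, hsum]; ring

/-- `g` is a trigonometric polynomial of degree at most `n`. -/
def IsTrigPoly (n : ℕ) (g : ℝ → ℝ) : Prop :=
  ∃ Q : Polynomial ℂ, Q.natDegree ≤ 2 * n ∧
    ∀ θ : ℝ, Complex.exp (θ * Complex.I) ^ n * (g θ : ℂ) = Q.eval (Complex.exp (θ * Complex.I))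

lemma IsTrigPoly.sum {n : ℕ} {ι : Type*} (s : Finset ι) (g : ι → ℝ → ℝ)
    (h : ∀ i ∈ s, IsTrigPoly n (g i)) : IsTrigPoly n (fun θ => ∑ i ∈ s, g i θ) := by
  classical
  choose! Q hQ hQ' using h
  refine ⟨∑ i ∈ s, Q i, Polynomial.natDegree_sum_le_of_forall_le _ _ hQ, fun θ => ?_⟩
  rw [Polynomial.eval_finsetSum]
  push_cast
  rw [Finset.mul_sum]
  exact Finset.sum_congr rfl fun i hi => hQ' i hi θ

lemma isTrigPoly_mono (n a b : ℕ) (hab : a + b ≤ n) (c : ℝ) :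
    IsTrigPoly n (fun θ => Real.cos θ ^ a * Real.sin θ ^ b * c) := by
  refine ⟨Polynomial.C (c : ℂ) * (Polynomial.X ^ (n - a - b) *
    (Polynomial.C (1 / 2 : ℂ) * (Polynomial.X ^ 2 + Polynomial.C 1)) ^ a *
    (Polynomial.C (-Complex.I / 2 : ℂ) * (Polynomial.X ^ 2 - Polynomial.C 1)) ^ b), ?_, ?_⟩
  · have h1 : (Polynomial.C (1 / 2 : ℂ) * (Polynomial.X ^ 2 + Polynomial.C 1)).natDegree ≤ 2 := by
      refine (Polynomial.natDegree_C_mul_le _ _).trans ?_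
      rw [Polynomial.natDegree_X_pow_add_C]
    have h2 : (Polynomial.C (-Complex.I / 2 : ℂ) *
        (Polynomial.X ^ 2 - Polynomial.C 1)).natDegree ≤ 2 := by
      refine (Polynomial.natDegree_C_mul_le _ _).trans ?_
      rw [Polynomial.natDegree_X_pow_sub_C]
    refine (Polynomial.natDegree_C_mul_le _ _).trans ?_
    refine Polynomial.natDegree_mul_le.trans ?_
    have h3 := Polynomial.natDegree_pow_le_of_le b h2
    have h4 := Polynomial.natDegree_mul_le_of_le (Polynomial.natDegree_X_pow_le (R := ℂ) (n - a - b))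
      (Polynomial.natDegree_pow_le_of_le a h1)
    omega
  · intro θ
    have hne : Complex.exp (θ * Complex.I) ≠ 0 := Complex.exp_ne_zero _
    have hc : (2⁻¹ * (Complex.exp (θ * Complex.I) ^ 2 + 1))
        = Complex.exp (θ * Complex.I) * Complex.cos θ := by
      rw [Complex.cos, neg_mul, Complex.exp_neg]; field_simp
    have hs : (-Complex.I / 2 * (Complex.exp (θ * Complex.I) ^ 2 - 1))
        = Complex.exp (θ * Complex.I) * Complex.sin θ := by
      rw [Complex.sin, neg_mul, Complex.exp_neg]; field_simp; ring
    simp only [Polynomial.eval_mul, Polynomial.eval_pow, Polynomial.eval_add, Polynomial.eval_sub,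
      Polynomial.eval_C, Polynomial.eval_X, one_div]
    rw [hc, hs]
    push_cast
    obtain ⟨k, rfl⟩ := Nat.exists_eq_add_of_le hab
    have : a + b + k - a - b = k := by omega
    rw [this]
    ring

lemma bernstein_szego (n : ℕ) (g : ℝ → ℝ) (hg : IsTrigPoly n g) (M : ℝ) (hM : ∀ θ, |g θ| ≤ M)
    (g' : ℝ) (hg' : HasDerivAt g g' 0) :
    (n : ℝ) ^ 2 * g 0 ^ 2 + g' ^ 2 ≤ (n : ℝ) ^ 2 * M ^ 2 := by
  obtain ⟨Q, hQ, hQe⟩ := hg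
  have hM0 : 0 ≤ M := (abs_nonneg _).trans (hM 0)
  have hQM : ∀ z : ℂ, ‖z‖ = 1 → ‖Q.eval z‖ ≤ M := by
    intro z hz
    have : Complex.exp ((Complex.arg z : ℝ) * Complex.I) = z := by
      have := Complex.norm_mul_exp_arg_mul_I z
      rwa [hz, Complex.ofReal_one, one_mul] at this
    have h2 := hQe (Complex.arg z)
    rw [this] at h2
    rw [← h2]
    simpa [hz] using hM _
  have hQ1 : Q.eval 1 = g 0 := by have := hQe 0; simpa using this.symm
  have hE : HasDerivAt (fun θ : ℝ => Complex.exp (θ * Complex.I)) Complex.I 0 := by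
    have h1 : HasDerivAt (fun θ : ℝ => (θ : ℂ) * Complex.I) (1 * Complex.I) 0 :=
      (Complex.ofRealCLM.hasDerivAt (x := (0:ℝ))).mul_const _
    simpa using h1.cexp
  have hL : HasDerivAt (fun θ : ℝ => Complex.exp (θ * Complex.I) ^ n * (g θ : ℂ))
      (n * Complex.I * g 0 + g') 0 := by
    exact ((hE.pow n).mul hg'.ofReal_comp).congr_deriv (by simp)
  have hR : HasDerivAt (fun θ : ℝ => Q.eval (Complex.exp (θ * Complex.I)))
      (Q.derivative.eval 1 * Complex.I) 0 := by
    have h1 := Q.hasDerivAt (Complex.exp ((0:ℝ) * Complex.I))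
    have h2 := h1.comp (0:ℝ) hE
    have h3 : Complex.exp ((0:ℝ) * Complex.I) = 1 := by simp
    rw [h3] at h2
    exact h2
  have heq := hL.unique (by simpa only [hQe] using hR)
  have hQ' : Q.derivative.eval 1 = n * g 0 - Complex.I * g' := by
    have : Q.derivative.eval 1 = - (Q.derivative.eval 1 * Complex.I) * Complex.I := by
      linear_combination Q.derivative.eval 1 * Complex.I_mul_I
    rw [this, ← heq]
    linear_combination (-n * g 0 : ℂ) * Complex.I_mul_I
  set Z : ℂ := n * g 0 + Complex.I * g' with hZ
  have hZn : ‖Z‖ ^ 2 = (n : ℝ) ^ 2 * g 0 ^ 2 + g' ^ 2 := by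
    rw [← Complex.normSq_eq_norm_sq, Complex.normSq_apply]
    simp [hZ]; ring
  rw [← hZn, ← mul_pow]
  by_cases hZ0 : Z = 0
  · rw [hZ0]; simp; positivity
  have hr : (‖Z‖ : ℂ) ≠ 0 := by simpa using hZ0
  have key := szego_poly (2 * n) Q hQ M hQM ((Z / ‖Z‖) ^ 2) (by
    rw [norm_pow, norm_div]; simp [hZ0])
  have h5 : Z * (n * g 0 - Complex.I * g') = (‖Z‖ : ℂ) ^ 2 := by
    have : ((‖Z‖ : ℝ) : ℂ) ^ 2 = (((n : ℝ) ^ 2 * g 0 ^ 2 + g' ^ 2 : ℝ) : ℂ) := by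
      rw [← hZn]; push_cast; rfl
    rw [this, hZ]; push_cast
    linear_combination (- g' ^ 2 : ℂ) * Complex.I_mul_I
  have h6 : ((2 * n : ℕ) : ℂ) * Q.eval 1 + ((Z / ‖Z‖) ^ 2 - 1) * Q.derivative.eval 1 = 2 * Z := by
    rw [hQ1, hQ']
    have : (Z / ‖Z‖) ^ 2 * (n * g 0 - Complex.I * g') = Z := by
      rw [div_pow, div_mul_eq_mul_div, pow_two, mul_assoc, h5]
      field_simp
    push_cast
    linear_combination this - hZ
  rw [h6] at key
  have h7 : ‖Z‖ ≤ n * M := by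
    simp only [norm_mul] at key
    push_cast at key
    norm_num at key
    linarith
  gcongr

section Poly
variable {𝕜 : Type*} [RCLike 𝕜] {H : Type*} [NormedAddCommGroup H] [InnerProductSpace 𝕜 H]

lemma multilin_expand {j : ℕ} (L : ContinuousMultilinearMap 𝕜 (fun _ : Fin j => H) 𝕜) (x y : H)
    (a b : 𝕜) :
    L (fun _ => a • x + b • y) = ∑ s : Finset (Fin j),
      a ^ s.card * b ^ (j - s.card) * L (s.piecewise (fun _ => x) (fun _ => y)) := by
  have h0 : (fun _ : Fin j => a • x + b • y) = (fun _ => a • x) + (fun _ => b • y) := rfl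
  rw [h0, L.map_add_univ]
  refine Finset.sum_congr rfl fun s _ => ?_
  have h1 : (s.piecewise (fun _ : Fin j => a • x) (fun _ => b • y)) =
      fun i => (if i ∈ s then a else b) • (s.piecewise (fun _ : Fin j => x) (fun _ => y)) i := by
    funext i
    by_cases hi : i ∈ s <;> simp [hi]
  rw [h1, L.map_smul_univ, smul_eq_mul]
  congr 1
  rw [Finset.prod_ite]
  simp only [Finset.prod_const]
  congr 2
  · congr 1; ext; simp
  · have : Finset.univ.filter (fun i => i ∉ s) = sᶜ := by ext; simp
    rw [this, Finset.card_compl, Fintype.card_fin]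

lemma poly_hasFDerivAt {n : ℕ}
    (L : (j : Fin (n + 1)) → ContinuousMultilinearMap 𝕜 (fun _ : Fin (j : ℕ) => H) 𝕜)
    (P : H → 𝕜) (hP : ∀ x, P x = ∑ j, L j (fun _ => x)) (x : H) : DifferentiableAt 𝕜 P x := by
  have : P = fun x => ∑ j, L j (fun _ => x) := funext hP
  rw [this]
  refine DifferentiableAt.fun_sum fun j _ => ?_
  exact DifferentiableAt.comp x (((L j).hasFDerivAt _).differentiableAt) (by fun_prop)

lemma hilbert_orth (n : ℕ) (P : H → 𝕜)
    (L : (j : Fin (n + 1)) → ContinuousMultilinearMap 𝕜 (fun _ : Fin (j : ℕ) => H) 𝕜)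
    (hP : ∀ x, P x = ∑ j, L j (fun _ => x)) (M : ℝ) (hM : ∀ u, ‖u‖ = 1 → ‖P u‖ ≤ M)
    (x y : H) (hx : ‖x‖ = 1) (hy : ‖y‖ = 1) (hxy : inner 𝕜 x y = 0) :
    (n : ℝ) ^ 2 * ‖P x‖ ^ 2 + ‖fderiv 𝕜 P x y‖ ^ 2 ≤ (n : ℝ) ^ 2 * M ^ 2 := by
  obtain ⟨d, hd, hdP⟩ := RCLike.exists_norm_eq_mul_self (P x)
  obtain ⟨c, hc, hcP⟩ := RCLike.exists_norm_eq_mul_self (d * fderiv 𝕜 P x y)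
  let _ : NormedSpace ℝ H := NormedSpace.restrictScalars ℝ 𝕜 H
  have : IsScalarTower ℝ 𝕜 H := RestrictScalars.isScalarTower ℝ 𝕜 H
  set γ : ℝ → H := fun θ => (Real.cos θ : 𝕜) • x + (Real.sin θ : 𝕜) • (c • y) with hγ
  have hγ1 : ∀ θ, ‖γ θ‖ = 1 := by
    intro θ
    have h : ‖γ θ‖ * ‖γ θ‖ = 1 := by
      rw [hγ, norm_add_sq_eq_norm_sq_add_norm_sq_of_inner_eq_zero (𝕜 := 𝕜) _ _ (by
        rw [inner_smul_left, inner_smul_right, inner_smul_right, hxy]; simp)]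
      simp only [norm_smul, hx, hy, hc, RCLike.norm_ofReal, mul_one, abs_mul_abs_self]
      nlinarith [Real.sin_sq_add_cos_sq θ]
    nlinarith [norm_nonneg (γ θ)]
  have hγ0 : γ 0 = x := by simp [hγ]
  have hγ' : HasDerivAt γ (c • y) 0 := by
    have h1 : HasDerivAt (fun θ : ℝ => (Real.cos θ : 𝕜)) 0 0 := by
      have := (RCLike.ofRealCLM (K := 𝕜)).hasFDerivAt.comp_hasDerivAt (0:ℝ) (Real.hasDerivAt_cos 0)
      exact this.congr_deriv (by simp)
    have h2 : HasDerivAt (fun θ : ℝ => (Real.sin θ : 𝕜)) 1 0 := by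
      have := (RCLike.ofRealCLM (K := 𝕜)).hasFDerivAt.comp_hasDerivAt (0:ℝ) (Real.hasDerivAt_sin 0)
      exact this.congr_deriv (by simp)
    exact ((h1.smul_const x).add (h2.smul_const (c • y))).congr_deriv (by simp)
  have hPd : HasDerivAt (fun θ => P (γ θ)) (fderiv 𝕜 P x (c • y)) 0 := by
    have h1 := ((poly_hasFDerivAt L P hP x).hasFDerivAt).restrictScalars ℝ
    rw [← hγ0] at h1
    have := h1.comp_hasDerivAt (0:ℝ) hγ'
    rw [hγ0] at this
    exact this
  set g : ℝ → ℝ := fun θ => RCLike.re (d * P (γ θ)) with hg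
  have hgd : HasDerivAt g ‖fderiv 𝕜 P x y‖ 0 := by
    have h1 := (RCLike.reCLM (K := 𝕜)).hasFDerivAt.comp_hasDerivAt (0:ℝ) (hPd.const_mul d)
    refine h1.congr_deriv ?_
    have : d * fderiv 𝕜 P x (c • y) = c * (d * fderiv 𝕜 P x y) := by
      rw [map_smul, smul_eq_mul]; ring
    rw [RCLike.reCLM_apply, this, ← hcP, RCLike.ofReal_re, norm_mul, hd, one_mul]
  have hg0 : g 0 = ‖P x‖ := by
    simp only [hg]; rw [hγ0, ← hdP, RCLike.ofReal_re]
  have hgM : ∀ θ, |g θ| ≤ M := by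
    intro θ
    refine (RCLike.abs_re_le_norm _).trans ?_
    rw [norm_mul, hd, one_mul]
    exact hM _ (hγ1 θ)
  have hgt : IsTrigPoly n g := by
    have : g = fun θ => ∑ j : Fin (n + 1), ∑ s : Finset (Fin (j : ℕ)),
        Real.cos θ ^ s.card * Real.sin θ ^ ((j : ℕ) - s.card) *
          RCLike.re (d * L j (s.piecewise (fun _ => x) (fun _ => c • y))) := by
      funext θ
      simp only [hg, hγ]
      rw [hP, Finset.mul_sum, map_sum]
      refine Finset.sum_congr rfl fun j _ => ?_
      rw [multilin_expand, Finset.mul_sum, map_sum]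
      refine Finset.sum_congr rfl fun s _ => ?_
      rw [← RCLike.re_ofReal_mul]
      congr 1
      push_cast
      ring
    rw [this]
    refine IsTrigPoly.sum _ _ fun j _ => IsTrigPoly.sum _ _ fun s _ => isTrigPoly_mono _ _ _ ?_ _
    have h1 : s.card ≤ j := by simpa using s.card_le_univ
    omega
  have := bernstein_szego n g hgt M hgM _ hgd
  rwa [hg0] at this

lemma hilbert_main (n : ℕ) (P : H → 𝕜)
    (L : (j : Fin (n + 1)) → ContinuousMultilinearMap 𝕜 (fun _ : Fin (j : ℕ) => H) 𝕜)
    (hP : ∀ x, P x = ∑ j, L j (fun _ => x)) (M : ℝ) (hM : ∀ u, ‖u‖ = 1 → ‖P u‖ ≤ M)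
    (x : H) (hx : ‖x‖ = 1) :
    (n : ℝ) ^ 2 * ‖P x‖ ^ 2 - ‖fderiv 𝕜 P x x‖ ^ 2 + ‖fderiv 𝕜 P x‖ ^ 2
      ≤ (n : ℝ) ^ 2 * M ^ 2 := by
  set φ := fderiv 𝕜 P x with hφ
  set K : ℝ := (n : ℝ) ^ 2 * M ^ 2 - (n : ℝ) ^ 2 * ‖P x‖ ^ 2 with hK
  have hK0 : 0 ≤ K := by
    have := hM x hx
    have : ‖P x‖ ^ 2 ≤ M ^ 2 := by gcongr
    have : (n : ℝ) ^ 2 * ‖P x‖ ^ 2 ≤ (n : ℝ) ^ 2 * M ^ 2 := by gcongr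
    linarith
  have ho : ∀ y, inner 𝕜 x y = 0 → ‖φ y‖ ≤ √K * ‖y‖ := by
    intro y hy
    by_cases hy0 : y = 0
    · simp [hy0]
    have hyn : ‖y‖ ≠ 0 := by simpa using hy0
    have h := hilbert_orth n P L hP M hM x (((‖y‖⁻¹ : ℝ) : 𝕜) • y) hx (by
      rw [norm_smul]; simp [hyn]) (by rw [inner_smul_right, hy, mul_zero])
    have h2 : ‖φ (((‖y‖⁻¹ : ℝ) : 𝕜) • y)‖ ≤ √K := by
      apply Real.le_sqrt_of_sq_le
      linarith
    rw [map_smul, norm_smul, RCLike.norm_ofReal, abs_of_nonneg (by positivity)] at h2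
    rwa [inv_mul_le_iff₀ (by positivity), mul_comm] at h2
  have hb : ‖φ‖ ≤ √(‖φ x‖ ^ 2 + K) := by
    refine φ.opNorm_le_bound (Real.sqrt_nonneg _) fun v => ?_
    set a : 𝕜 := inner 𝕜 x v with ha
    set y : H := v - a • x with hy
    have hxy : inner 𝕜 x y = 0 := by
      rw [hy, inner_sub_right, inner_smul_right, inner_self_eq_norm_sq_to_K, hx]; simp [ha]
    have hv : v = a • x + y := by simp [hy]
    have hvn : ‖v‖ ^ 2 = ‖a‖ ^ 2 + ‖y‖ ^ 2 := by
      have := norm_add_sq_eq_norm_sq_add_norm_sq_of_inner_eq_zero (𝕜 := 𝕜) (a • x) y (by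
        rw [inner_smul_left, hxy, mul_zero])
      rw [← hv, norm_smul, hx] at this
      linarith
    have h1 : ‖φ v‖ ≤ ‖a‖ * ‖φ x‖ + √K * ‖y‖ := by
      conv_lhs => rw [hv, map_add, map_smul]
      refine (norm_add_le _ _).trans ?_
      rw [norm_smul]
      gcongr
      exact ho y hxy
    refine h1.trans ?_
    have h3 : ‖v‖ = √(‖a‖ ^ 2 + ‖y‖ ^ 2) := by rw [← hvn, Real.sqrt_sq (norm_nonneg _)]
    rw [h3, ← Real.sqrt_mul (by positivity)]
    apply Real.le_sqrt_of_sq_le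
    have h4 := Real.sq_sqrt hK0
    set t := √K
    rw [← h4]
    nlinarith [sq_nonneg (‖φ x‖ * ‖y‖ - t * ‖a‖)]
  have hb2 : ‖φ‖ ^ 2 ≤ ‖φ x‖ ^ 2 + K := by
    rw [← Real.sq_sqrt (show 0 ≤ ‖φ x‖ ^ 2 + K by positivity)]
    gcongr
  linarith

lemma poly_bdd (n : ℕ) (P : H → 𝕜)
    (L : (j : Fin (n + 1)) → ContinuousMultilinearMap 𝕜 (fun _ : Fin (j : ℕ) => H) 𝕜)
    (hP : ∀ x, P x = ∑ j, L j (fun _ => x)) :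
    BddAbove ((fun u => ‖P u‖) '' closedBall (0 : H) 1) := by
  refine ⟨∑ j, ‖L j‖, ?_⟩
  rintro _ ⟨u, hu, rfl⟩
  have hu : ‖u‖ ≤ 1 := by simpa using hu
  simp only [hP]
  refine (norm_sum_le _ _).trans (Finset.sum_le_sum fun j _ => ?_)
  refine ((L j).le_opNorm _).trans ?_
  simp only [Finset.prod_const]
  exact mul_le_of_le_one_right (norm_nonneg _) (pow_le_one₀ (norm_nonneg _) hu)

lemma homog_as_poly {n : ℕ} (L : ContinuousMultilinearMap 𝕜 (fun _ : Fin n => H) 𝕜) :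
    ∃ L' : (j : Fin (n + 1)) → ContinuousMultilinearMap 𝕜 (fun _ : Fin (j : ℕ) => H) 𝕜,
      ∀ x, L (fun _ => x) = ∑ j, L' j (fun _ => x) := by
  refine ⟨Fin.lastCases (motive := fun j : Fin (n + 1) =>
    ContinuousMultilinearMap 𝕜 (fun _ : Fin (j : ℕ) => H) 𝕜) L (fun _ => 0), fun x => ?_⟩
  rw [Fin.sum_univ_castSucc]
  simp [Fin.lastCases_last, Fin.lastCases_castSucc]

lemma homog_fderiv {n : ℕ} (L : ContinuousMultilinearMap 𝕜 (fun _ : Fin n => H) 𝕜) (x y : H) :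
    fderiv 𝕜 (fun u => L (fun _ => u)) x y
      = ∑ i, L (Function.update (fun _ => x) i y) := by
  have h := (L.hasFDerivAt (fun _ => x)).comp x
    (ContinuousLinearMap.pi (fun _ : Fin n => ContinuousLinearMap.id 𝕜 H)).hasFDerivAt
  have h2 : HasFDerivAt (fun u => L (fun _ => u)) ((L.linearDeriv fun _ => x).comp
    (ContinuousLinearMap.pi (fun _ : Fin n => ContinuousLinearMap.id 𝕜 H))) x := h
  rw [h2.fderiv]
  simp [ContinuousMultilinearMap.linearDeriv_apply]

lemma homog_fderiv_symm {n : ℕ} (L : ContinuousMultilinearMap 𝕜 (fun _ : Fin (n + 1) => H) 𝕜)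
    (hL : ∀ (σ : Equiv.Perm (Fin (n + 1))) (v : Fin (n + 1) → H), L (v ∘ σ) = L v) (x y : H) :
    fderiv 𝕜 (fun u => L (fun _ => u)) x y
      = (n + 1 : ℕ) * L (Fin.cons y (fun _ => x)) := by
  rw [homog_fderiv]
  have : ∀ i : Fin (n + 1), L (Function.update (fun _ => x) i y) = L (Fin.cons y (fun _ => x)) := by
    intro i
    rw [← hL (Equiv.swap 0 i) (Fin.cons y (fun _ => x))]
    congr 1
    funext k
    by_cases hk : k = i
    · subst hk; simp
    · rw [Function.update_of_ne hk, Function.comp_apply]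
      have h0 : Equiv.swap 0 i k ≠ 0 := by
        intro h
        apply hk
        have := congrArg (Equiv.swap 0 i) h
        simpa using this
      obtain ⟨m, hm⟩ := Fin.exists_succ_eq.2 h0
      rw [← hm, Fin.cons_succ]
  simp [this]

lemma polarization (n : ℕ) : ∀ (L : ContinuousMultilinearMap 𝕜 (fun _ : Fin n => H) 𝕜),
    (∀ (σ : Equiv.Perm (Fin n)) (v : Fin n → H), L (v ∘ σ) = L v) →
    ∀ M : ℝ, (∀ u, ‖L (fun _ => u)‖ ≤ M * ‖u‖ ^ n) → ∀ v, ‖L v‖ ≤ M * ∏ i, ‖v i‖ := by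
  induction n with
  | zero =>
    intro L _ M hM v
    have := hM 0
    rw [Subsingleton.elim v (fun _ => 0)]
    simpa using this
  | succ n ih =>
    intro L hL M hM v
    have key : ∀ x y, ‖x‖ = 1 → ‖L (Fin.cons y (fun _ => x))‖ ≤ M * ‖y‖ := by
      intro x y hx
      obtain ⟨L', hL'⟩ := homog_as_poly L
      have h := hilbert_main (n + 1) (fun u => L (fun _ => u)) L' hL' M
        (fun u hu => by simpa [hu] using hM u) x hx
      have hM0 : 0 ≤ M := by
        have := hM x
        rw [hx, one_pow, mul_one] at this
        exact (norm_nonneg _).trans this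
      have hxx : fderiv 𝕜 (fun u => L (fun _ => u)) x x = (n + 1 : ℕ) * L (fun _ => x) := by
        rw [homog_fderiv]; simp
      rw [hxx, norm_mul, RCLike.norm_natCast, mul_pow] at h
      have h2 : ‖fderiv 𝕜 (fun u => L (fun _ => u)) x‖ ≤ (n + 1 : ℕ) * M := by
        refine (sq_le_sq₀ (norm_nonneg _) (by positivity)).1 ?_
        rw [mul_pow]; linarith
      have h3 := (fderiv 𝕜 (fun u => L (fun _ => u)) x).le_of_opNorm_le h2 y
      rw [homog_fderiv_symm L hL, norm_mul, RCLike.norm_natCast, mul_assoc] at h3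
      exact le_of_mul_le_mul_left h3 (by positivity)
    have key2 : ∀ x y, ‖L (Fin.cons y (fun _ => x))‖ ≤ (M * ‖y‖) * ‖x‖ ^ n := by
      intro x y
      by_cases hx : x = 0
      · rcases Nat.eq_zero_or_pos n with rfl | hn
        · have h := hM y
          have : (Fin.cons y (fun _ => x) : Fin (0 + 1) → H) = fun _ => y := by
            funext i; fin_cases i; rfl
          rw [this]; simpa using h
        · have : L (Fin.cons y (fun _ => x)) = 0 :=
            L.map_coord_zero (Fin.succ ⟨0, hn⟩) (by rw [Fin.cons_succ, hx])
          rw [this, hx]; simp [hn.ne']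
      · have hxn : ‖x‖ ≠ 0 := by simpa using hx
        have h := key (((‖x‖⁻¹ : ℝ) : 𝕜) • x) y (by rw [norm_smul]; simp [hxn])
        have h2 : L (Fin.cons y (fun _ => x)) = ((‖x‖ : ℝ) : 𝕜) ^ n *
            L (Fin.cons y (fun _ => ((‖x‖⁻¹ : ℝ) : 𝕜) • x)) := by
          rw [← L.curryLeft_apply, ← L.curryLeft_apply,
            (L.curryLeft y).map_smul_univ (fun _ => ((‖x‖⁻¹ : ℝ) : 𝕜)) (fun _ => x)]
          have hxk : ((‖x‖ : ℝ) : 𝕜) ≠ 0 := by exact_mod_cast hxn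
          simp [hxk]
        rw [h2, norm_mul, norm_pow, RCLike.norm_ofReal, abs_norm, mul_comm]
        gcongr
    have h := ih (L.curryLeft (v 0)) (by
      intro σ w
      rw [L.curryLeft_apply, L.curryLeft_apply,
        ← hL (Equiv.Perm.decomposeFin.symm (0, σ)) (Fin.cons (v 0) w)]
      congr 1
      funext k
      refine Fin.cases ?_ (fun i => ?_) k
      · simp
      · simp) (M * ‖v 0‖) (fun u => by
      rw [L.curryLeft_apply]; exact key2 u (v 0)) (fun i => v i.succ)
    rw [L.curryLeft_apply] at h
    have hv : (Fin.cons (v 0) (fun i : Fin n => v i.succ) : Fin (n + 1) → H) = v :=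
      Fin.cons_self_tail v
    rw [hv] at h
    rw [Fin.prod_univ_succ, ← mul_assoc]
    exact h

lemma norm_eq_sup {n : ℕ} (L : ContinuousMultilinearMap 𝕜 (fun _ : Fin n => H) 𝕜)
    (hL : ∀ (σ : Equiv.Perm (Fin n)) (v : Fin n → H), L (v ∘ σ) = L v) :
    ‖L‖ = sSup ((fun u => ‖L (fun _ => u)‖) '' closedBall (0 : H) 1) := by
  obtain ⟨L', hL'⟩ := homog_as_poly L
  have hbdd := poly_bdd n (fun u => L (fun _ => u)) L' hL'
  set M := sSup ((fun u => ‖L (fun _ => u)‖) '' closedBall (0 : H) 1) with hMdef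
  have hM : ∀ u : H, ‖u‖ ≤ 1 → ‖L (fun _ => u)‖ ≤ M := fun u hu =>
    le_csSup hbdd ⟨u, by simpa using hu, rfl⟩
  apply le_antisymm
  · refine L.opNorm_le_bound ((norm_nonneg _).trans (hM 0 (by simp))) ?_
    refine polarization n L hL M fun u => ?_
    by_cases hu : u = 0
    · rcases Nat.eq_zero_or_pos n with rfl | hn
      · have := hM 0 (by simp)
        simpa [hu] using this
      · have : L (fun _ => u) = 0 := L.map_coord_zero ⟨0, hn⟩ hu
        rw [this, hu]; simp [hn.ne']
    · have hun : ‖u‖ ≠ 0 := by simpa using hu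
      have h := hM (((‖u‖⁻¹ : ℝ) : 𝕜) • u) (by rw [norm_smul]; simp [hun])
      have h2 : L (fun _ => u) = ((‖u‖ : ℝ) : 𝕜) ^ n * L (fun _ => ((‖u‖⁻¹ : ℝ) : 𝕜) • u) := by
        rw [L.map_smul_univ (fun _ => ((‖u‖⁻¹ : ℝ) : 𝕜)) (fun _ => u)]
        have hxk : ((‖u‖ : ℝ) : 𝕜) ≠ 0 := by exact_mod_cast hun
        simp [hxk]
      rw [h2, norm_mul, norm_pow, RCLike.norm_ofReal, abs_norm, mul_comm]
      gcongr
  · refine csSup_le ⟨_, ⟨0, by simp, rfl⟩⟩ ?_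
    rintro _ ⟨u, hu, rfl⟩
    have hu : ‖u‖ ≤ 1 := by simpa using hu
    refine (L.le_opNorm _).trans ?_
    simp only [Finset.prod_const]
    exact mul_le_of_le_one_right (norm_nonneg _) (pow_le_one₀ (norm_nonneg _) hu)

end Poly

/-- Bernstein's inequality on a real or complex Hilbert space: if `P` is a continuous
polynomial of degree `n`, then for every unit vector `x`,
`n²|P(x)|² - |DP(x)x|² + ‖DP(x)‖² ≤ n²‖P‖²`. In particular, every continuous
`n`-homogeneous polynomial `L̂` satisfies `‖DL̂(x)‖ ≤ n ‖L̂‖` on the closed unit ball;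
equivalently, `‖L‖ = ‖L̂‖` for every continuous symmetric `n`-linear form `L`. -/
theorem bernstein_inequality_hilbert
    {𝕜 : Type*} [RCLike 𝕜] {H : Type*} [NormedAddCommGroup H]
    [InnerProductSpace 𝕜 H] [CompleteSpace H] (n : ℕ) :
    (∀ P : H → 𝕜,
      (∃ L : (j : Fin (n + 1)) → ContinuousMultilinearMap 𝕜 (fun _ : Fin (j : ℕ) => H) 𝕜,
        ∀ x, P x = ∑ j, L j (fun _ => x)) →
      ∀ x : H, ‖x‖ = 1 →
        (n : ℝ) ^ 2 * ‖P x‖ ^ 2 - ‖fderiv 𝕜 P x x‖ ^ 2 + ‖fderiv 𝕜 P x‖ ^ 2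
          ≤ (n : ℝ) ^ 2 * (sSup ((fun u => ‖P u‖) '' closedBall (0 : H) 1)) ^ 2) ∧
    (∀ F : H → 𝕜,
      (∃ L : ContinuousMultilinearMap 𝕜 (fun _ : Fin n => H) 𝕜,
        (∀ (σ : Equiv.Perm (Fin n)) (v : Fin n → H), L (v ∘ σ) = L v) ∧
        ∀ u, F u = L (fun _ => u)) →
      ∀ x : H, ‖x‖ ≤ 1 →
        ‖fderiv 𝕜 F x‖ ≤ (n : ℝ) * sSup ((fun u => ‖F u‖) '' closedBall (0 : H) 1)) ∧
    (∀ L : ContinuousMultilinearMap 𝕜 (fun _ : Fin n => H) 𝕜,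
      (∀ (σ : Equiv.Perm (Fin n)) (v : Fin n → H), L (v ∘ σ) = L v) →
      ‖L‖ = sSup ((fun u => ‖L (fun _ => u)‖) '' closedBall (0 : H) 1)) := by
  refine ⟨?_, ?_, fun L hL => norm_eq_sup L hL⟩
  · rintro P ⟨L, hP⟩ x hx
    exact hilbert_main n P L hP _ (fun u hu =>
      le_csSup (poly_bdd n P L hP) ⟨u, by simp [hu], rfl⟩) x hx
  · rintro F ⟨L, hL, hF⟩ x hx
    obtain rfl : F = fun u => L (fun _ => u) := funext hF
    simp only
    rw [← norm_eq_sup L hL]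
    refine ContinuousLinearMap.opNorm_le_bound _ (by positivity) fun y => ?_
    rw [homog_fderiv]
    refine (norm_sum_le _ _).trans ?_
    have h : ∀ i ∈ (Finset.univ : Finset (Fin n)),
        ‖L (Function.update (fun _ => x) i y)‖ ≤ ‖L‖ * ‖y‖ := by
      intro i _
      refine (L.le_opNorm _).trans ?_
      gcongr
      rw [← Finset.mul_prod_erase _ _ (Finset.mem_univ i), Function.update_self]
      refine mul_le_of_le_one_right (norm_nonneg _) ?_
      refine Finset.prod_le_one (fun _ _ => norm_nonneg _) fun k hk => ?_
      rwa [Function.update_of_ne (Finset.ne_of_mem_erase hk)]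
    refine (Finset.sum_le_sum h).trans ?_
    simp [mul_assoc]
end
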